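/- arXiv:2601.09554 — 5 statements merged into one kernel-verified Lean document; each statement's English description precedes it below -/
import Mathlib

section
/- Under the linear-mix model, the conditional mean of X given Y exists and is linear: for (μ.map Y)-almost every y ∈ ℝ, the identity function is integrable with respect to the conditional law condDistrib X Y μ y, and ∫ x d(condDistrib X Y μ y)(x) = κ·y, where κ = ((|a₂₁|γ_{Z₁})^α·(a₁₁/a₂₁) + (|a₂₂|γ_{Z₂})^α·(a₁₂/a₂₂)) / ((|a₂₁|γ_{Z₁})^α + (|a₂₂|γ_{Z₂})^α). -/
open MeasureTheory ProbabilityTheory Real Set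

namespace LinMix

noncomputable section

/-- The characteristic function of a symmetric stable law. -/
def phi (c α t : ℝ) : ℝ := Real.exp (-(c * |t| ^ α))

/-- The derivative of `phi` away from the origin. -/
def dphi (c α t : ℝ) : ℝ :=
  -(c * ((SignType.sign t : ℝ) * α * |t| ^ (α - 1))) * Real.exp (-(c * |t| ^ α))

/-- Gaussian weight with modulation. -/
def gw (τ v t : ℝ) : ℂ :=
  Complex.exp ((-(1/2) : ℂ) * (t:ℂ) ^ 2 + ((τ:ℂ) + Complex.I * v) * t + (-((τ:ℂ)^2/2)))

/-- The transform of the Gaussian weight, without its constant. -/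
def ee (τ x : ℝ) : ℂ := Complex.exp (Complex.I * τ * x - (x:ℂ)^2/2)

/-- The Gaussian constant. -/
def cc : ℂ := ((π:ℂ) / -(-(1/2) : ℂ)) ^ (1 / 2 : ℂ)

lemma cc_ne : cc ≠ 0 := by
  unfold cc
  rw [Complex.cpow_ne_zero_iff_of_exponent_ne_zero (by norm_num)]
  simp [Real.pi_ne_zero]

lemma gw_mul (τ v u t : ℝ) : gw τ v t * Complex.exp (t * u * Complex.I) = gw τ (u + v) t := by
  unfold gw
  rw [← Complex.exp_add]
  congr 1
  push_cast
  ring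

lemma integrable_gw (τ v : ℝ) : Integrable (gw τ v) :=
  integrable_cexp_quadratic' (by norm_num) _ _

lemma integral_gw (τ x : ℝ) : ∫ t, gw τ x t = cc * ee τ x := by
  unfold gw cc ee
  rw [integral_cexp_quadratic (by norm_num)]
  congr 2
  have := Complex.I_sq
  linear_combination (- (x:ℂ)^2/2) * (-1) * this

lemma norm_gw (τ v t : ℝ) : ‖gw τ v t‖ = Real.exp (-(1/2) * (t - τ)^2) := by
  unfold gw
  rw [Complex.norm_exp]
  congr 1
  simp [← Complex.ofReal_pow]
  ring

lemma norm_gw_le (τ v t : ℝ) : ‖gw τ v t‖ ≤ 1 := by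
  rw [norm_gw, Real.exp_le_one_iff]
  nlinarith [sq_nonneg (t - τ)]

lemma norm_ee (τ x : ℝ) : ‖ee τ x‖ = Real.exp (-x^2/2) := by
  unfold ee
  rw [Complex.norm_exp]
  congr 1
  simp [← Complex.ofReal_pow]
  ring

lemma continuous_gw (τ : ℝ) : Continuous (fun p : ℝ × ℝ => gw τ p.1 p.2) := by
  unfold gw; fun_prop

lemma continuous_gw' (τ v : ℝ) : Continuous (gw τ v) := by
  unfold gw; fun_prop

lemma continuous_ee (τ : ℝ) : Continuous (ee τ) := by
  unfold ee; fun_prop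

/-- derivative of `gw` -/
def dgw (τ v t : ℝ) : ℂ := (-((t:ℂ) - τ) + Complex.I * v) * gw τ v t

lemma continuous_dgw (τ v : ℝ) : Continuous (dgw τ v) := by
  unfold dgw gw; fun_prop

lemma hasDerivAt_gw (τ v t : ℝ) : HasDerivAt (gw τ v) (dgw τ v t) t := by
  have h : HasDerivAt (fun z : ℂ => Complex.exp ((-(1/2) : ℂ) * z ^ 2 +
      ((τ:ℂ) + Complex.I * v) * z + (-((τ:ℂ)^2/2)))) (dgw τ v t) (t:ℂ) := by
    have h1 : HasDerivAt (fun z : ℂ => (-(1/2) : ℂ) * z ^ 2 +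
      ((τ:ℂ) + Complex.I * v) * z + (-((τ:ℂ)^2/2)))
        ((-(1/2) : ℂ) * (2 * (t:ℂ)) + ((τ:ℂ) + Complex.I * v)) (t:ℂ) := by
      have ha := ((hasDerivAt_pow 2 (t:ℂ)).const_mul (-(1/2) : ℂ))
      have hb := (hasDerivAt_id (t:ℂ)).const_mul ((τ:ℂ) + Complex.I * v)
      convert! (ha.add hb).add_const (-((τ:ℂ)^2/2)) using 1
      simp
    convert! h1.cexp using 1
    unfold dgw gw
    ring
  exact h.comp_ofReal

lemma integrable_dgw (τ v : ℝ) : Integrable (dgw τ v) := by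
  have h1 : Integrable (fun t : ℝ => -((t:ℂ) - τ) * gw τ v t) := by
    have := (integrable_mul_exp_neg_mul_sq (b := 1/2) (by norm_num)).comp_sub_right τ
    refine this.mono (by unfold gw; exact (by fun_prop : Continuous _).aestronglyMeasurable) ?_
    filter_upwards with t
    rw [norm_mul, norm_gw, norm_mul, norm_neg, ← Complex.ofReal_sub, Complex.norm_real,
      Real.norm_of_nonneg (Real.exp_pos _).le]
  have h2 := (integrable_gw τ v).const_mul (Complex.I * v)
  refine (h1.add h2).congr (Filter.Eventually.of_forall fun t => ?_)
  simp only [dgw, Pi.add_apply]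
  ring

/-- smooth integration by parts -/
lemma parts_smooth (τ v u : ℝ) :
    Complex.I * u * (cc * ee τ (u + v)) = -∫ t : ℝ, dgw τ v t * Complex.exp (t * u * Complex.I) := by
  have h0 := integral_eq_zero_of_hasDerivAt_of_integrable (fun t => hasDerivAt_gw τ (u+v) t)
    (integrable_dgw τ (u+v)) (integrable_gw τ (u+v))
  have e1 : ∀ t, dgw τ (u+v) t = dgw τ v t * Complex.exp (t * u * Complex.I)
      + Complex.I * u * gw τ (u+v) t := by
    intro t
    unfold dgw
    rw [mul_assoc _ (gw τ v t), gw_mul]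
    push_cast
    ring
  have hi : Integrable (fun t : ℝ => dgw τ v t * Complex.exp (t * u * Complex.I)) := by
    have := (integrable_dgw τ (u+v)).sub ((integrable_gw τ (u+v)).const_mul (Complex.I * u))
    refine this.congr ?_
    filter_upwards with t
    simp [e1]
  simp_rw [e1] at h0
  rw [integral_add hi ((integrable_gw τ (u+v)).const_mul _), integral_const_mul, integral_gw] at h0
  linear_combination h0

lemma integrable_dphi {c α : ℝ} (hc : 0 < c) (hα : 0 < α) : Integrable (dphi c α) := by
  have h := integrableOn_rpow_mul_exp_neg_mul_rpow (p := α) (s := α - 1) (b := c)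
    (by linarith) hα hc
  have h1 : IntegrableOn (dphi c α) (Ioi 0) := by
    refine IntegrableOn.congr_fun (h.const_mul (-(c * α))) ?_ measurableSet_Ioi
    intro t ht
    have ht' : (0:ℝ) < t := ht
    simp only [dphi, sign_pos ht', abs_of_pos ht']
    simp
    ring
  have h2 : IntegrableOn (dphi c α) (Iio 0) := by
    have := h1.comp_neg.neg
    rw [Set.neg_Ioi, neg_zero] at this
    refine this.congr_fun ?_ measurableSet_Iio
    intro t ht
    simp [dphi, Left.sign_neg]
  rw [← integrableOn_univ, ← Iic_union_Ioi (a := (0:ℝ)), integrableOn_union]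
  exact ⟨(integrableOn_Iic_iff_integrableOn_Iio (by simp)).2 h2, h1⟩

lemma continuous_phi {c α : ℝ} (hα : 0 < α) : Continuous (phi c α) := by
  unfold phi
  have : Continuous fun t : ℝ => |t| ^ α := continuous_abs.rpow_const (fun _ => Or.inr hα.le)
  fun_prop

lemma phi_le {c α : ℝ} (hc : 0 < c) (t : ℝ) : ‖phi c α t‖ ≤ 1 := by
  unfold phi
  rw [Real.norm_of_nonneg (Real.exp_pos _).le, Real.exp_le_one_iff]
  have : 0 ≤ |t| ^ α := by positivity
  nlinarith

lemma hasDerivAt_phi {c α t : ℝ} (ht : t ≠ 0) : HasDerivAt (phi c α) (dphi c α t) t := by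
  have h1 := (hasDerivAt_abs ht).rpow_const (p := α) (Or.inl (abs_ne_zero.2 ht))
  have h2 := (h1.const_mul c).fun_neg.exp
  convert! h2 using 1
  unfold dphi
  ring

lemma tendsto_gwphi {c α : ℝ} (hc : 0 < c) (τ v : ℝ) (l : Filter ℝ) (hl : Filter.Tendsto (fun t => (t - τ)^2) l Filter.atTop) :
    Filter.Tendsto (fun t => gw τ v t * (phi c α t : ℂ)) l (nhds 0) := by
  have : Filter.Tendsto (fun t => Real.exp (-(1/2) * (t - τ)^2)) l (nhds 0) :=
    Real.tendsto_exp_atBot.comp (hl.const_mul_atTop_of_neg (by norm_num))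
  refine squeeze_zero_norm (fun t => ?_) this
  rw [norm_mul, norm_gw, Complex.norm_real]
  exact mul_le_of_le_one_right (Real.exp_pos _).le (phi_le hc t)

lemma parts_phi {c α : ℝ} (hc : 0 < c) (hα : 0 < α) (τ v : ℝ) :
    ∫ t, gw τ v t * (dphi c α t : ℂ) = -∫ t, dgw τ v t * (phi c α t : ℂ) := by
  have i1 : Integrable (fun t => gw τ v t * (dphi c α t : ℂ)) :=
    (integrable_dphi hc hα).ofReal.bdd_mul (continuous_gw' τ v).aestronglyMeasurable
      (Filter.Eventually.of_forall (norm_gw_le τ v))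
  have i2 : Integrable (fun t => dgw τ v t * (phi c α t : ℂ)) := by
    refine (integrable_dgw τ v).mul_bdd (c := 1) (Complex.continuous_ofReal.comp (continuous_phi hα)).aestronglyMeasurable
      (Filter.Eventually.of_forall fun t => ?_)
    simpa using phi_le (α := α) hc t
  have hd : ∀ t : ℝ, t ≠ 0 → HasDerivAt (fun t => gw τ v t * (phi c α t : ℂ))
      (dgw τ v t * (phi c α t : ℂ) + gw τ v t * (dphi c α t : ℂ)) t := fun t ht =>
    (hasDerivAt_gw τ v t).mul (hasDerivAt_phi ht).ofReal_comp
  have hcont : Continuous (fun t => gw τ v t * (phi c α t : ℂ)) :=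
    (continuous_gw' τ v).mul (Complex.continuous_ofReal.comp (continuous_phi hα))
  have i3 := i2.add i1
  have a1 := integral_Ioi_of_hasDerivAt_of_tendsto (a := 0) hcont.continuousWithinAt
    (fun t ht => hd t (ne_of_gt ht)) i3.integrableOn
    (tendsto_gwphi hc τ v _ ((Filter.tendsto_pow_atTop two_ne_zero).comp
      (Filter.tendsto_atTop_add_const_right _ _ Filter.tendsto_id)))
  have a2 := integral_Iic_of_hasDerivAt_of_tendsto (a := 0) hcont.continuousWithinAt
    (fun t ht => hd t (ne_of_lt ht)) i3.integrableOn
    (tendsto_gwphi hc τ v _ (by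
      have := (Filter.tendsto_pow_atTop (α := ℝ) two_ne_zero).comp (Filter.tendsto_neg_atBot_atTop.comp
        (Filter.tendsto_atBot_add_const_right _ (-τ) Filter.tendsto_id))
      refine this.congr fun t => ?_
      simp
      ring))
  have a3 := setIntegral_union (Iic_disjoint_Ioi (le_refl (0:ℝ))) measurableSet_Ioi
    i3.integrableOn i3.integrableOn
  rw [Iic_union_Ioi, setIntegral_univ] at a3
  simp only [Pi.add_apply] at a3
  rw [a1, a2, integral_add i2 i1] at a3
  linear_combination a3

lemma key {c α : ℝ} (hc : 0 < c) (hα : 0 < α) {ν : Measure ℝ} [IsProbabilityMeasure ν]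
    (hν : ∀ t, charFun ν t = (phi c α t : ℂ)) (τ v : ℝ) :
    ∫ u, Complex.I * u * (cc * ee τ (u + v)) ∂ν = ∫ t, gw τ v t * (dphi c α t : ℂ) := by
  rw [parts_phi hc hα]
  simp_rw [parts_smooth]
  rw [integral_neg, integral_integral_swap]
  · congr 1
    refine integral_congr_ae (Filter.Eventually.of_forall fun t => ?_)
    simp only
    rw [integral_const_mul, ← hν, charFun_apply_real]
  · have h := (Integrable.mul_prod (f := fun _ : ℝ => (1:ℂ)) (μ := ν) (integrable_const 1)
      (integrable_dgw τ v))
    have h2 := h.mul_bdd (c := 1) (g := fun p : ℝ × ℝ => Complex.exp (p.2 * p.1 * Complex.I))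
      (by exact (by fun_prop : Continuous _).aestronglyMeasurable)
      (Filter.Eventually.of_forall fun p => by
        rw [← Complex.ofReal_mul, Complex.norm_exp_ofReal_mul_I])
    refine h2.congr (Filter.Eventually.of_forall fun p => ?_)
    simp [Function.uncurry]

lemma abs_mul_exp_le (x : ℝ) : |x| * Real.exp (-x^2/2) ≤ 1 := by
  have h1 : |x| ≤ Real.exp (x^2/2) := by
    have := Real.add_one_le_exp (x^2/2)
    have h3 : |x|^2 = x^2 := sq_abs x
    nlinarith [sq_nonneg (|x| - 1)]
  calc |x| * Real.exp (-x^2/2) ≤ Real.exp (x^2/2) * Real.exp (-x^2/2) := by gcongr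
    _ = 1 := by rw [← Real.exp_add]; simp; ring

lemma integrable_weight (ν : Measure ℝ) [IsProbabilityMeasure ν] (v : ℝ) :
    Integrable (fun u => u * Real.exp (-(u+v)^2/2)) ν := by
  refine Integrable.of_bound (C := 1 + |v|)
    (by exact (by fun_prop : Continuous _).aestronglyMeasurable) ?_
  filter_upwards with u
  rw [norm_mul, Real.norm_of_nonneg (Real.exp_pos _).le, Real.norm_eq_abs]
  have h1 := abs_mul_exp_le (u + v)
  have h2 : |u| ≤ |u + v| + |v| := by
    have := abs_sub (u+v) v
    simpa using this
  have h3 : Real.exp (-(u+v)^2/2) ≤ 1 := by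
    rw [Real.exp_le_one_iff]; nlinarith [sq_nonneg (u+v)]
  have h4 := Real.exp_pos (-(u+v)^2/2)
  nlinarith [abs_nonneg v]

lemma abs_le_sign (u v : ℝ) : |u| * Real.exp (-(u+v)^2/2) ≤
    (if v ≤ 0 then 1 else -1) * (u * Real.exp (-(u+v)^2/2)) + 2 := by
  have key : ∀ u v : ℝ, v ≤ 0 → |u| * Real.exp (-(u+v)^2/2) ≤ u * Real.exp (-(u+v)^2/2) + 2 := by
    intro u v hv
    rcases le_or_gt 0 u with hu | hu
    · rw [abs_of_nonneg hu]; linarith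
    · have h1 := abs_mul_exp_le u
      have h2 : Real.exp (-(u+v)^2/2) ≤ Real.exp (-u^2/2) := by
        apply Real.exp_le_exp.2; nlinarith
      rw [abs_of_neg hu] at *
      nlinarith
  split_ifs with hv
  · simpa using key u v hv
  · have := key (-u) (-v) (by linarith)
    rw [abs_neg, show (-u + -v)^2 = (u+v)^2 by ring] at this
    linarith

lemma weight_bound {c α : ℝ} (hc : 0 < c) (hα : 0 < α) {ν : Measure ℝ} [IsProbabilityMeasure ν]
    (hν : ∀ t, charFun ν t = (phi c α t : ℂ)) :
    ∃ M, ∀ v, ∫ u, |u| * Real.exp (-(u+v)^2/2) ∂ν ≤ M := by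
  refine ⟨‖cc‖⁻¹ * (∫ t, ‖dphi c α t‖) + 2, fun v => ?_⟩
  have h1 : ‖∫ u, Complex.I * u * (cc * ee 0 (u + v)) ∂ν‖ ≤ ∫ t, ‖dphi c α t‖ := by
    rw [key hc hα hν]
    refine norm_integral_le_of_norm_le (integrable_dphi hc hα).norm ?_
    filter_upwards with t
    rw [norm_mul, Complex.norm_real]
    exact mul_le_of_le_one_left (norm_nonneg _) (norm_gw_le _ _ _)
  have h2 : ∫ u, Complex.I * u * (cc * ee 0 (u + v)) ∂ν
      = Complex.I * cc * ((∫ u, u * Real.exp (-(u+v)^2/2) ∂ν : ℝ) : ℂ) := by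
    rw [← integral_complex_ofReal, ← integral_const_mul]
    congr 1
    funext u
    unfold ee
    push_cast
    rw [show Complex.I * 0 * ((u:ℂ)+v) - ((u:ℂ)+v)^2/2 = -((u:ℂ)+v)^2/2 by ring]
    ring
  have h3 : |∫ u, u * Real.exp (-(u+v)^2/2) ∂ν| ≤ ‖cc‖⁻¹ * (∫ t, ‖dphi c α t‖) := by
    rw [h2, norm_mul, norm_mul, Complex.norm_I, one_mul, Complex.norm_real] at h1
    have := norm_pos_iff.2 cc_ne
    rw [inv_mul_eq_div, le_div_iff₀' this]
    exact h1
  have hi := integrable_weight ν v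
  have h4 : ∫ u, |u| * Real.exp (-(u+v)^2/2) ∂ν ≤
      ∫ u, ((if v ≤ 0 then 1 else -1) * (u * Real.exp (-(u+v)^2/2)) + 2) ∂ν := by
    refine integral_mono ?_ ((hi.const_mul _).add (integrable_const _)) (fun u => abs_le_sign u v)
    refine hi.norm.congr (Filter.Eventually.of_forall fun u => ?_)
    simp
  rw [integral_add (hi.const_mul _) (integrable_const _), integral_const_mul] at h4
  simp only [integral_const, probReal_univ, one_smul] at h4
  have h5 := abs_le.1 h3
  split_ifs at h4 <;> linarith

lemma integrable_prod_weight {c α : ℝ} (hc : 0 < c) (hα : 0 < α) {ν ν' : Measure ℝ}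
    [IsProbabilityMeasure ν] [IsProbabilityMeasure ν']
    (hν : ∀ t, charFun ν t = (phi c α t : ℂ)) :
    Integrable (fun p : ℝ × ℝ => p.1 * Real.exp (-(p.1+p.2)^2/2)) (ν.prod ν') := by
  obtain ⟨M, hM⟩ := weight_bound hc hα hν
  have hm : AEStronglyMeasurable (fun p : ℝ × ℝ => p.1 * Real.exp (-(p.1+p.2)^2/2)) (ν.prod ν') :=
    (by fun_prop : Continuous _).aestronglyMeasurable
  rw [integrable_prod_iff' hm]
  refine ⟨Filter.Eventually.of_forall fun v => integrable_weight ν v, ?_⟩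
  refine Integrable.of_bound (C := M) hm.norm.prod_swap.integral_prod_right' ?_
  filter_upwards with v
  rw [Real.norm_of_nonneg (by positivity)]
  simpa using hM v

lemma norm_u_ee (τ x y : ℝ) : ‖(x:ℂ) * ee τ y‖ = ‖x * Real.exp (-y^2/2)‖ := by
  rw [norm_mul, norm_ee, norm_mul, Complex.norm_real, Real.norm_of_nonneg (Real.exp_pos _).le]

lemma integrable_prod_ee {c α : ℝ} (hc : 0 < c) (hα : 0 < α) {ν ν' : Measure ℝ}
    [IsProbabilityMeasure ν] [IsProbabilityMeasure ν']
    (hν : ∀ t, charFun ν t = (phi c α t : ℂ)) (τ : ℝ) :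
    Integrable (fun p : ℝ × ℝ => (p.1:ℂ) * ee τ (p.1+p.2)) (ν.prod ν') := by
  refine (integrable_prod_weight hc hα hν).mono
    (by unfold ee; exact (by fun_prop : Continuous _).aestronglyMeasurable) ?_
  filter_upwards with p
  rw [norm_u_ee]

lemma prod_key {c c' α : ℝ} (hc : 0 < c) (hα : 0 < α) {ν ν' : Measure ℝ}
    [IsProbabilityMeasure ν] [IsProbabilityMeasure ν']
    (hν : ∀ t, charFun ν t = (phi c α t : ℂ)) (hν' : ∀ t, charFun ν' t = (phi c' α t : ℂ)) (τ : ℝ) :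
    Complex.I * cc * ∫ p : ℝ × ℝ, (p.1:ℂ) * ee τ (p.1+p.2) ∂(ν.prod ν')
      = ∫ t, gw τ 0 t * ((phi c' α t * dphi c α t : ℝ) : ℂ) := by
  rw [integral_prod_symm _ (integrable_prod_ee hc hα hν τ), ← integral_const_mul]
  have h1 : ∀ v : ℝ, Complex.I * cc * ∫ u : ℝ, (u:ℂ) * ee τ (u+v) ∂ν
      = ∫ t, gw τ v t * (dphi c α t : ℂ) := by
    intro v
    rw [← key hc hα hν, ← integral_const_mul]
    congr 1
    funext u
    ring
  rw [integral_congr_ae (Filter.Eventually.of_forall h1), integral_integral_swap]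
  · refine integral_congr_ae (Filter.Eventually.of_forall fun t => ?_)
    simp only
    have h2 : ∀ v : ℝ, gw τ v t * (dphi c α t : ℂ)
        = (gw τ 0 t * (dphi c α t : ℂ)) * Complex.exp (t * v * Complex.I) := by
      intro v
      have := gw_mul τ 0 v t
      rw [add_zero] at this
      rw [← this]; ring
    rw [integral_congr_ae (Filter.Eventually.of_forall h2), integral_const_mul, ← charFun_apply_real, hν']
    push_cast; ring
  · have h := (Integrable.mul_prod (f := fun _ : ℝ => (1:ℂ)) (μ := ν') (integrable_const 1)
      (integrable_dphi hc hα).ofReal)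
    have h2 := h.bdd_mul (c := 1) (continuous_gw τ).aestronglyMeasurable
      (Filter.Eventually.of_forall fun p => norm_gw_le τ p.1 p.2)
    refine h2.congr (Filter.Eventually.of_forall fun p => ?_)
    simp [Function.uncurry]

lemma integrable_sum_ee {ν ν' : Measure ℝ}
    [IsProbabilityMeasure ν] [IsProbabilityMeasure ν'] (τ : ℝ) :
    Integrable (fun p : ℝ × ℝ => ((p.1+p.2 : ℝ):ℂ) * ee τ (p.1+p.2)) (ν.prod ν') := by
  refine Integrable.of_bound (C := 1)
    (by unfold ee; exact (by fun_prop : Continuous _).aestronglyMeasurable) ?_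
  filter_upwards with p
  rw [norm_u_ee, norm_mul, Real.norm_of_nonneg (Real.exp_pos _).le]
  exact abs_mul_exp_le _

lemma prod_key_sum {c c' α : ℝ} (hc : 0 < c) (hc' : 0 < c') (hα : 0 < α) {ν ν' : Measure ℝ}
    [IsProbabilityMeasure ν] [IsProbabilityMeasure ν']
    (hν : ∀ t, charFun ν t = (phi c α t : ℂ)) (hν' : ∀ t, charFun ν' t = (phi c' α t : ℂ)) (τ : ℝ) :
    Complex.I * cc * ∫ p : ℝ × ℝ, ((p.1+p.2 : ℝ):ℂ) * ee τ (p.1+p.2) ∂(ν.prod ν')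
      = ∫ t, gw τ 0 t * (dphi (c + c') α t : ℂ) := by
  have h : ∀ t, charFun (ν ∗ ν') t = (phi (c + c') α t : ℂ) := by
    intro t
    rw [charFun_conv, hν, hν', ← Complex.ofReal_mul]
    unfold phi
    rw [← Real.exp_add]
    congr 2
    ring
  rw [← key (add_pos hc hc') hα h, ← integral_const_mul, Measure.conv,
    integral_map (by fun_prop) (by unfold ee; exact (by fun_prop : Continuous _).aestronglyMeasurable)]
  congr 1
  funext p
  rw [add_zero]
  ring

lemma prod_zero {c c' α : ℝ} (hc : 0 < c) (hc' : 0 < c') (hα : 0 < α) {ν ν' : Measure ℝ}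
    [IsProbabilityMeasure ν] [IsProbabilityMeasure ν']
    (hν : ∀ t, charFun ν t = (phi c α t : ℂ)) (hν' : ∀ t, charFun ν' t = (phi c' α t : ℂ)) (τ : ℝ) :
    ∫ p : ℝ × ℝ, ((p.1 - c / (c + c') * (p.1 + p.2) : ℝ):ℂ) * ee τ (p.1+p.2) ∂(ν.prod ν') = 0 := by
  have h1 := prod_key hc hα hν hν' τ
  have h2 := prod_key_sum hc hc' hα hν hν' τ
  have h3 : ∫ t, gw τ 0 t * ((phi c' α t * dphi c α t : ℝ) : ℂ)
      = ((c / (c + c') : ℝ) : ℂ) * ∫ t, gw τ 0 t * (dphi (c + c') α t : ℂ) := by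
    rw [← integral_const_mul]
    congr 1
    funext t
    have : phi c' α t * dphi c α t = c / (c + c') * dphi (c + c') α t := by
      have hs : c + c' ≠ 0 := (add_pos hc hc').ne'
      unfold phi dphi
      rw [show -((c + c') * |t| ^ α) = -(c' * |t|^α) + -(c * |t|^α) by ring, Real.exp_add]
      field_simp
    rw [this]
    push_cast
    ring
  rw [h3, ← h2] at h1
  have h4 : ∫ p : ℝ × ℝ, ((p.1 - c / (c + c') * (p.1 + p.2) : ℝ):ℂ) * ee τ (p.1+p.2) ∂(ν.prod ν')
      = (∫ p : ℝ × ℝ, (p.1:ℂ) * ee τ (p.1+p.2) ∂(ν.prod ν')) - ((c / (c + c') : ℝ) : ℂ) *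
        ∫ p : ℝ × ℝ, ((p.1+p.2 : ℝ):ℂ) * ee τ (p.1+p.2) ∂(ν.prod ν') := by
    rw [← integral_const_mul, ← integral_sub (integrable_prod_ee hc hα hν τ)
      ((integrable_sum_ee τ).const_mul _)]
    congr 1
    funext p
    push_cast
    ring
  rw [h4]
  have h5 : Complex.I * cc ≠ 0 := mul_ne_zero Complex.I_ne_zero cc_ne
  apply mul_left_cancel₀ h5
  linear_combination h1

lemma ae_zero (P : Measure ℝ) [IsFiniteMeasure P] (m : ℝ → ℝ) (hm : Measurable m)
    (hi : Integrable m P) (h : ∀ τ : ℝ, ∫ y, (m y : ℂ) * Complex.exp (τ * y * Complex.I) ∂P = 0) :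
    ∀ᵐ y ∂P, m y = 0 := by
  have f1 : IsFiniteMeasure (P.withDensity fun y => ENNReal.ofReal (m y)) :=
    isFiniteMeasure_withDensity_ofReal hi.2
  have f2 : IsFiniteMeasure (P.withDensity fun y => ENNReal.ofReal (-m y)) :=
    isFiniteMeasure_withDensity_ofReal hi.neg.2
  have hI : ∀ (g : ℝ → ℝ) (_ : Integrable g P) (τ : ℝ),
      Integrable (fun y => (ENNReal.ofReal (g y)).toReal • Complex.exp (τ * y * Complex.I)) P := by
    intro g hg τ
    have := (hg.pos_part.ofReal (𝕜 := ℂ)).mul_bdd (c := 1)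
      (g := fun y : ℝ => Complex.exp (τ * y * Complex.I))
      (by exact (by fun_prop : Continuous _).aestronglyMeasurable)
      (Filter.Eventually.of_forall fun p => by
        rw [← Complex.ofReal_mul, Complex.norm_exp_ofReal_mul_I])
    refine this.congr (Filter.Eventually.of_forall fun y => ?_)
    simp [ENNReal.toReal_ofReal']
  have e : (P.withDensity fun y => ENNReal.ofReal (m y))
      = P.withDensity fun y => ENNReal.ofReal (-m y) := by
    apply Measure.ext_of_charFun
    funext τ
    rw [charFun_apply_real, charFun_apply_real,
      integral_withDensity_eq_integral_toReal_smul (by fun_prop) (by simp),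
      integral_withDensity_eq_integral_toReal_smul (by fun_prop) (by simp)]
    rw [← sub_eq_zero, ← integral_sub (hI m hi τ) (hI (fun y => -m y) hi.neg τ), ← h τ]
    congr 1
    funext y
    have : (m y : ℂ) = (((m y).toNNReal : ℝ) - ((-m y).toNNReal : ℝ) : ℝ) := by
      congr 1
      rw [Real.coe_toNNReal', Real.coe_toNNReal']
      rcases le_total 0 (m y) with h | h
      · rw [max_eq_left h, max_eq_right (by linarith)]; ring
      · rw [max_eq_right h, max_eq_left (by linarith)]; ring
    rw [this]
    simp only [ENNReal.ofReal, ENNReal.coe_toReal, Complex.real_smul]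
    push_cast
    ring
  have hfin : ∫⁻ y, ENNReal.ofReal (m y) ∂P ≠ ⊤ := by
    have := measure_ne_top (P.withDensity fun y => ENNReal.ofReal (m y)) univ
    simpa using this
  rw [withDensity_eq_iff (by fun_prop) (by fun_prop) hfin] at e
  filter_upwards [e] with y hy
  rcases lt_trichotomy (m y) 0 with h | h | h
  · rw [ENNReal.ofReal_of_nonpos h.le, eq_comm, ENNReal.ofReal_eq_zero] at hy; linarith
  · exact h
  · rw [ENNReal.ofReal_of_nonpos (by linarith : -m y ≤ 0), ENNReal.ofReal_eq_zero] at hy; linarith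

lemma charFun_map_scaled {Ω : Type*} [MeasurableSpace Ω] {μ : Measure Ω}
    {α γ a : ℝ} (hγ : 0 < γ) {Z : Ω → ℝ} (hZ : Measurable Z)
    (hchar : ∀ t : ℝ, ∫ ω, Complex.exp (((t * Z ω : ℝ) : ℂ) * Complex.I) ∂μ
      = Complex.exp (-((γ ^ α * |t| ^ α : ℝ) : ℂ))) (t : ℝ) :
    charFun (μ.map fun ω => a * Z ω) t = (phi ((|a| * γ) ^ α) α t : ℂ) := by
  rw [charFun_apply_real, integral_map (by fun_prop)
    (by exact (by fun_prop : Continuous _).aestronglyMeasurable)]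
  have := hchar (t * a)
  rw [abs_mul, Real.mul_rpow (abs_nonneg _) (abs_nonneg _)] at this
  unfold phi
  rw [Real.mul_rpow (abs_nonneg _) hγ.le]
  push_cast at this ⊢
  rw [show -((((|a| ^ α : ℝ) : ℂ)) * ((γ ^ α : ℝ) : ℂ) * ((|t| ^ α : ℝ) : ℂ))
    = -(((γ ^ α : ℝ) : ℂ) * (((|t| ^ α : ℝ) : ℂ) * ((|a| ^ α : ℝ) : ℂ))) by ring, ← this]
  congr 1
  funext ω
  congr 1
  ring

end

end LinMix

/-- Under the linear-mix model (`X = a₁₁Z₁ + a₁₂Z₂`, `Y = a₂₁Z₁ + a₂₂Z₂` with `Z₁, Z₂`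
independent SαS variables), the conditional mean of `X` given `Y = y` exists and is linear
in `y`. -/
theorem linearMix_condMean_linear
    {Ω : Type*} [MeasurableSpace Ω] {μ : Measure Ω} [IsProbabilityMeasure μ]
    (α γ₁ γ₂ : ℝ) (hα : α ∈ Set.Ioo (0 : ℝ) 2) (hγ₁ : 0 < γ₁) (hγ₂ : 0 < γ₂)
    (a₁₁ a₁₂ a₂₁ a₂₂ : ℝ) (ha₂₁ : a₂₁ ≠ 0) (ha₂₂ : a₂₂ ≠ 0)
    (hdet : a₁₁ * a₂₂ - a₁₂ * a₂₁ ≠ 0)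
    (Z₁ Z₂ : Ω → ℝ) (hZ₁ : Measurable Z₁) (hZ₂ : Measurable Z₂)
    (hindep : IndepFun Z₁ Z₂ μ)
    (hchar₁ : ∀ t : ℝ, ∫ ω, Complex.exp (((t * Z₁ ω : ℝ) : ℂ) * Complex.I) ∂μ
      = Complex.exp (-((γ₁ ^ α * |t| ^ α : ℝ) : ℂ)))
    (hchar₂ : ∀ t : ℝ, ∫ ω, Complex.exp (((t * Z₂ ω : ℝ) : ℂ) * Complex.I) ∂μ
      = Complex.exp (-((γ₂ ^ α * |t| ^ α : ℝ) : ℂ)))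
    (X Y : Ω → ℝ) (hX : X = fun ω => a₁₁ * Z₁ ω + a₁₂ * Z₂ ω)
    (hY : Y = fun ω => a₂₁ * Z₁ ω + a₂₂ * Z₂ ω) :
    ∀ᵐ y ∂(μ.map Y),
      Integrable (fun x => x) (condDistrib X Y μ y) ∧
      ∫ x, x ∂(condDistrib X Y μ y)
        = (((|a₂₁| * γ₁) ^ α * (a₁₁ / a₂₁) + (|a₂₂| * γ₂) ^ α * (a₁₂ / a₂₂))
            / ((|a₂₁| * γ₁) ^ α + (|a₂₂| * γ₂) ^ α)) * y := by
  classical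
  have hα0 : 0 < α := hα.1
  set U : Ω → ℝ := fun ω => a₂₁ * Z₁ ω with hU
  set V : Ω → ℝ := fun ω => a₂₂ * Z₂ ω with hV
  have mU : Measurable U := hZ₁.const_mul _
  have mV : Measurable V := hZ₂.const_mul _
  have hUV : IndepFun U V μ :=
    hindep.comp (measurable_const_mul a₂₁) (measurable_const_mul a₂₂)
  have hmap : μ.map (fun ω => (U ω, V ω)) = (μ.map U).prod (μ.map V) :=
    hUV.map_prod_eq_prod_map_map mU.aemeasurable mV.aemeasurable
  have pU : IsProbabilityMeasure (μ.map U) := Measure.isProbabilityMeasure_map mU.aemeasurable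
  have pV : IsProbabilityMeasure (μ.map V) := Measure.isProbabilityMeasure_map mV.aemeasurable
  set c : ℝ := (|a₂₁| * γ₁) ^ α with hc_def
  set c' : ℝ := (|a₂₂| * γ₂) ^ α with hc'_def
  have hc : 0 < c := Real.rpow_pos_of_pos (mul_pos (abs_pos.2 ha₂₁) hγ₁) _
  have hc' : 0 < c' := Real.rpow_pos_of_pos (mul_pos (abs_pos.2 ha₂₂) hγ₂) _
  have cU : ∀ t, charFun (μ.map U) t = (LinMix.phi c α t : ℂ) :=
    fun t => LinMix.charFun_map_scaled hγ₁ hZ₁ hchar₁ t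
  have cV : ∀ t, charFun (μ.map V) t = (LinMix.phi c' α t : ℂ) :=
    fun t => LinMix.charFun_map_scaled hγ₂ hZ₂ hchar₂ t
  set κ : ℝ := (c * (a₁₁ / a₂₁) + c' * (a₁₂ / a₂₂)) / (c + c') with hκ
  have hYUV : ∀ ω, Y ω = U ω + V ω := fun ω => by rw [hY]
  have mX : Measurable X := by rw [hX]; fun_prop
  have mY : Measurable Y := by rw [hY]; fun_prop
  have hXY : ∀ ω, X ω - κ * Y ω
      = (a₁₁ / a₂₁ - a₁₂ / a₂₂) * (U ω - c / (c + c') * (U ω + V ω)) := by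
    intro ω
    have hs : c + c' ≠ 0 := (add_pos hc hc').ne'
    rw [hX, hY, hκ, hU, hV]
    field_simp
    ring
  -- the weighted residual
  set g : ℝ × ℝ → ℝ := fun p => (p.2 - κ * p.1) * Real.exp (-p.1 ^ 2 / 2) with hg
  have cg : Continuous g := by rw [hg]; fun_prop
  have mYX : Measurable fun ω => (Y ω, X ω) := mY.prodMk mX
  have mUV : Measurable fun ω => (U ω, V ω) := mU.prodMk mV
  have ig : Integrable g (μ.map fun ω => (Y ω, X ω)) := by
    rw [integrable_map_measure cg.aestronglyMeasurable mYX.aemeasurable]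
    have h0 : Integrable (fun p : ℝ × ℝ => (a₁₁ / a₂₁ - a₁₂ / a₂₂) *
        (p.1 * Real.exp (-(p.1 + p.2) ^ 2 / 2)
          - c / (c + c') * ((p.1 + p.2) * Real.exp (-(p.1 + p.2) ^ 2 / 2))))
        ((μ.map U).prod (μ.map V)) := by
      refine Integrable.const_mul (Integrable.sub (LinMix.integrable_prod_weight hc hα0 cU)
        (Integrable.const_mul ?_ _)) _
      refine Integrable.of_bound (C := 1) (by fun_prop) ?_
      filter_upwards with p
      rw [norm_mul, Real.norm_of_nonneg (Real.exp_pos _).le]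
      exact LinMix.abs_mul_exp_le _
    rw [← hmap, integrable_map_measure (by fun_prop) mUV.aemeasurable] at h0
    refine h0.congr (Filter.Eventually.of_forall fun ω => ?_)
    simp only [Function.comp, hg]
    rw [hXY, hYUV]
    ring
  set m : ℝ → ℝ := fun y => ∫ x, g (y, x) ∂(condDistrib X Y μ y) with hm
  have mm : Measurable m := (cg.stronglyMeasurable.integral_condDistrib).measurable
  have im : Integrable m (μ.map Y) := ig.integral_condDistrib_map mX.aemeasurable
  have hcomp : (μ.map Y) ⊗ₘ condDistrib X Y μ = μ.map fun ω => (Y ω, X ω) :=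
    compProd_map_condDistrib mX.aemeasurable
  have hz : ∀ τ : ℝ, ∫ y, (m y : ℂ) * Complex.exp (τ * y * Complex.I) ∂(μ.map Y) = 0 := by
    intro τ
    have i1 : Integrable (fun p : ℝ × ℝ => (g p : ℂ) * Complex.exp (τ * p.1 * Complex.I))
        (μ.map fun ω => (Y ω, X ω)) := by
      refine (ig.ofReal (𝕜 := ℂ)).mul_bdd (c := 1)
        (by exact (by fun_prop : Continuous _).aestronglyMeasurable)
        (Filter.Eventually.of_forall fun p => by
          rw [← Complex.ofReal_mul, Complex.norm_exp_ofReal_mul_I])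
    have e1 : ∫ y, (m y : ℂ) * Complex.exp (τ * y * Complex.I) ∂(μ.map Y)
        = ∫ p, (g p : ℂ) * Complex.exp (τ * p.1 * Complex.I) ∂(μ.map fun ω => (Y ω, X ω)) := by
      rw [← hcomp] at i1 ⊢
      rw [Measure.integral_compProd i1]
      refine integral_congr_ae (Filter.Eventually.of_forall fun y => ?_)
      simp only [hm]
      rw [integral_mul_const, integral_complex_ofReal]
    rw [e1, integral_map mYX.aemeasurable i1.aestronglyMeasurable]
    have h0 := LinMix.prod_zero hc hc' hα0 cU cV τ
    rw [← hmap, integral_map mUV.aemeasurable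
      (by unfold LinMix.ee; exact (by fun_prop : Continuous _).aestronglyMeasurable)] at h0
    have e2 : ∀ ω, (g (Y ω, X ω) : ℂ) * Complex.exp (τ * (Y ω) * Complex.I)
        = ((a₁₁ / a₂₁ - a₁₂ / a₂₂ : ℝ) : ℂ) *
          (((U ω - c / (c + c') * (U ω + V ω) : ℝ) : ℂ) * LinMix.ee τ (U ω + V ω)) := by
      intro ω
      simp only [hg]
      rw [hXY, ← hYUV ω]
      unfold LinMix.ee
      rw [show Complex.I * τ * (Y ω : ℂ) - (Y ω : ℂ) ^ 2 / 2
        = -(Y ω : ℂ) ^ 2 / 2 + τ * (Y ω) * Complex.I by ring, Complex.exp_add]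
      push_cast
      ring
    simp only [e2]
    rw [integral_const_mul, h0, mul_zero]
  have hm0 := LinMix.ae_zero (μ.map Y) m mm im hz
  have hint := ig.condDistrib_ae_map mX.aemeasurable
  filter_upwards [hm0, hint] with y h0 hi
  have hi2 : Integrable (fun x => x - κ * y) (condDistrib X Y μ y) := by
    refine (hi.mul_const (Real.exp (-y ^ 2 / 2))⁻¹).congr (Filter.Eventually.of_forall fun x => ?_)
    simp only [hg]
    rw [mul_assoc, mul_inv_cancel₀ (Real.exp_pos _).ne', mul_one]
  have hi3 : Integrable (fun x => x) (condDistrib X Y μ y) := by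
    refine (hi2.add (integrable_const (κ * y))).congr (Filter.Eventually.of_forall fun x => ?_)
    simp
  refine ⟨hi3, ?_⟩
  simp only [hm, hg] at h0
  rw [integral_mul_const, mul_eq_zero, or_iff_left (Real.exp_pos _).ne',
    integral_sub hi3 (integrable_const _)] at h0
  simp only [integral_const, probReal_univ, one_smul] at h0
  linarith
end

section
/- Additive-noise special case: let X and Z₂ be independent real random variables on a probability space (Ω, μ), with X SαS(α, γ_X) and Z₂ SαS(α, γ_{Z₂}), γ_X, γ_{Z₂} > 0, α ∈ (0,2), and let Y = a₂₁X + a₂₂Z₂ with a₂₁ ≠ 0 and a₂₂ ≠ 0. Then for (μ.map Y)-almost every y ∈ ℝ, the identity function is integrable with respect to condDistrib X Y μ y and ∫ x d(condDistrib X Y μ y)(x) = (γ_X^α|a₂₁|^α / (γ_X^α|a₂₁|^α + γ_{Z₂}^α|a₂₂|^α)) · (y/a₂₁). -/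
open MeasureTheory ProbabilityTheory Real Set

open Filter Topology in
lemma sas_int1 {α s : ℝ} (hα : 0 < α) (hs : 0 < s) :
    IntegrableOn (fun t : ℝ => exp (-(s * t ^ α))) (Ioi 0) := by
  have := integrableOn_rpow_mul_exp_neg_mul_rpow (s := 0) (p := α) (b := s) (by norm_num) hα hs
  simpa using this

lemma sas_int2 {α s : ℝ} (hα : 0 < α) (hs : 0 < s) :
    IntegrableOn (fun t : ℝ => s * α * t ^ (α - 1) * exp (-(s * t ^ α))) (Ioi 0) := by
  have := (integrableOn_rpow_mul_exp_neg_mul_rpow (s := α - 1) (p := α) (b := s)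
    (by linarith) hα hs).const_mul (s * α)
  refine IntegrableOn.congr_fun this (fun t _ => ?_) measurableSet_Ioi
  simp only [neg_mul]
  ring

/-- density of the SαS law -/
noncomputable def sasDens (α s x : ℝ) : ℝ :=
  π⁻¹ * ∫ t in Ioi (0 : ℝ), exp (-(s * t ^ α)) * cos (t * x)

/-- `x` times the density of the SαS law -/
noncomputable def sasG (α s x : ℝ) : ℝ :=
  π⁻¹ * ∫ t in Ioi (0 : ℝ), s * α * t ^ (α - 1) * exp (-(s * t ^ α)) * sin (t * x)

lemma sas_int1c {α s : ℝ} (hα : 0 < α) (hs : 0 < s) (x : ℝ) :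
    IntegrableOn (fun t : ℝ => exp (-(s * t ^ α)) * cos (t * x)) (Ioi 0) :=
  (sas_int1 hα hs).mul_bdd (c := 1) (by fun_prop)
    (ae_of_all _ fun t => by simpa using abs_cos_le_one _)

lemma sas_int2c {α s : ℝ} (hα : 0 < α) (hs : 0 < s) (x : ℝ) :
    IntegrableOn (fun t : ℝ => s * α * t ^ (α - 1) * exp (-(s * t ^ α)) * sin (t * x))
      (Ioi 0) :=
  (sas_int2 hα hs).mul_bdd (c := 1) (by fun_prop)
    (ae_of_all _ fun t => by simpa using abs_sin_le_one _)

open Filter Topology in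
lemma sas_mul_dens {α s : ℝ} (hα : 0 < α) (hs : 0 < s) (x : ℝ) :
    x * sasDens α s x = sasG α s x := by
  have h := integral_Ioi_of_hasDerivAt_of_tendsto (a := 0) (m := 0)
    (f := fun t : ℝ => sin (t * x) * exp (-(s * t ^ α)))
    (f' := fun t : ℝ => x * (exp (-(s * t ^ α)) * cos (t * x))
      - s * α * t ^ (α - 1) * exp (-(s * t ^ α)) * sin (t * x)) ?_ ?_ ?_ ?_
  · rw [integral_sub ((sas_int1c hα hs x).const_mul x) (sas_int2c hα hs x),
      integral_const_mul] at h
    simp only [zero_mul, sin_zero, sub_zero] at h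
    unfold sasDens sasG
    rw [← sub_eq_zero.mp h]; ring
  · apply Continuous.continuousWithinAt
    have : Continuous fun t : ℝ => t ^ α := continuous_id.rpow_const (fun _ => Or.inr hα.le)
    fun_prop
  · intro t ht
    have h1 : HasDerivAt (fun t : ℝ => sin (t * x)) (cos (t * x) * (1 * x)) t :=
      ((hasDerivAt_id t).mul_const x).sin
    have h2 : HasDerivAt (fun t : ℝ => t ^ α) (α * t ^ (α - 1)) t :=
      Real.hasDerivAt_rpow_const (Or.inl (ne_of_gt ht))
    have h3 := ((h2.const_mul s).neg).exp
    convert! h1.mul h3 using 1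
    simp only [Pi.neg_apply]
    ring
  · exact ((sas_int1c hα hs x).const_mul x).sub (sas_int2c hα hs x)
  · have h0 : Tendsto (fun t : ℝ => exp (-(s * t ^ α))) atTop (𝓝 0) :=
      tendsto_exp_neg_atTop_nhds_zero.comp ((tendsto_rpow_atTop hα).const_mul_atTop hs)
    refine squeeze_zero_norm (fun t => ?_) h0
    rw [norm_mul, norm_of_nonneg (exp_pos _).le]
    exact mul_le_of_le_one_left (exp_pos _).le (by simpa using abs_sin_le_one _)

lemma sasG_bdd {α s : ℝ} (hα : 0 < α) (hs : 0 < s) : ∃ C : ℝ, ∀ x, |sasG α s x| ≤ C := by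
  refine ⟨π⁻¹ * ∫ t in Ioi (0 : ℝ), s * α * t ^ (α - 1) * exp (-(s * t ^ α)), fun x => ?_⟩
  unfold sasG
  rw [abs_mul, abs_of_pos (inv_pos.2 pi_pos)]
  refine mul_le_mul_of_nonneg_left ?_ (inv_pos.2 pi_pos).le
  refine (Real.norm_eq_abs _).symm.le.trans ?_
  refine norm_integral_le_of_norm_le (sas_int2 hα hs) ?_
  filter_upwards [ae_restrict_mem measurableSet_Ioi] with t ht
  have ht : 0 < t := ht
  have : 0 ≤ s * α * t ^ (α - 1) * exp (-(s * t ^ α)) := by positivity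
  rw [norm_mul, norm_of_nonneg this]
  exact mul_le_of_le_one_right this (by simpa using abs_sin_le_one _)

lemma sasDens_meas (α s : ℝ) : Measurable (sasDens α s) := by
  unfold sasDens
  refine Measurable.const_mul ?_ _
  refine StronglyMeasurable.measurable ?_
  refine StronglyMeasurable.integral_prod_right'
    (f := fun p : ℝ × ℝ => exp (-(s * p.2 ^ α)) * cos (p.2 * p.1)) ?_
  exact Measurable.stronglyMeasurable (by fun_prop)

lemma sasDens_bdd {α s : ℝ} (hα : 0 < α) (hs : 0 < s) : ∃ C : ℝ, ∀ x, |sasDens α s x| ≤ C := by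
  refine ⟨π⁻¹ * ∫ t in Ioi (0 : ℝ), exp (-(s * t ^ α)), fun x => ?_⟩
  unfold sasDens
  rw [abs_mul, abs_of_pos (inv_pos.2 pi_pos)]
  refine mul_le_mul_of_nonneg_left ?_ (inv_pos.2 pi_pos).le
  refine (Real.norm_eq_abs _).symm.le.trans ?_
  refine norm_integral_le_of_norm_le (sas_int1 hα hs) (ae_of_all _ fun t => ?_)
  rw [norm_mul, norm_of_nonneg (exp_pos _).le]
  exact mul_le_of_le_one_right (exp_pos _).le (by simpa using abs_cos_le_one _)

lemma sasG_meas {α s : ℝ} (hα : 0 < α) (hs : 0 < s) : Measurable (sasG α s) := by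
  have : sasG α s = fun x => x * sasDens α s x := funext fun x => (sas_mul_dens hα hs x).symm
  rw [this]
  exact measurable_id.mul (sasDens_meas α s)

lemma sas_sin_int {ν : Measure ℝ} [IsProbabilityMeasure ν] {t r : ℝ}
    (h : charFun ν t = Complex.exp (-(r : ℂ))) (y : ℝ) :
    ∫ v, sin (t * (y - v)) ∂ν = sin (t * y) * exp (-r) := by
  have hi : Integrable (fun v : ℝ => Complex.exp (t * v * Complex.I)) ν := by
    refine Integrable.of_bound (C := 1) (by fun_prop) (ae_of_all _ fun v => ?_)
    rw [← Complex.ofReal_mul, Complex.norm_exp_ofReal_mul_I]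
  rw [charFun_apply_real] at h
  have hc : ∫ v, cos (t * v) ∂ν = exp (-r) := by
    have h1 := integral_re (𝕜 := ℂ) hi
    simp only [RCLike.re_to_complex] at h1
    rw [h] at h1
    rw [← Complex.ofReal_neg, Complex.exp_ofReal_re] at h1
    rw [← h1]
    congr 1 with v
    rw [← Complex.ofReal_mul, Complex.exp_ofReal_mul_I_re]
  have hsn : ∫ v, sin (t * v) ∂ν = 0 := by
    have h1 := integral_im (𝕜 := ℂ) hi
    simp only [RCLike.im_to_complex] at h1
    rw [h] at h1
    rw [← Complex.ofReal_neg, Complex.exp_ofReal_im] at h1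
    rw [← h1]
    congr 1 with v
    rw [← Complex.ofReal_mul, Complex.exp_ofReal_mul_I_im]
  have h1 : Integrable (fun v : ℝ => cos (t * v)) ν :=
    Integrable.of_bound (C := 1) (by fun_prop)
      (ae_of_all _ fun v => by simpa using abs_cos_le_one _)
  have h2 : Integrable (fun v : ℝ => sin (t * v)) ν :=
    Integrable.of_bound (C := 1) (by fun_prop)
      (ae_of_all _ fun v => by simpa using abs_sin_le_one _)
  simp_rw [mul_sub, sin_sub]
  rw [integral_sub (h1.const_mul _) (h2.const_mul _), integral_const_mul, integral_const_mul,
    hc, hsn]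
  ring

lemma sasG_conv {α s s' : ℝ} (hα : 0 < α) (hs : 0 < s) (hs' : 0 < s')
    {ν : Measure ℝ} [IsProbabilityMeasure ν]
    (h : ∀ t, charFun ν t = Complex.exp (-((s' * |t| ^ α : ℝ) : ℂ))) (y : ℝ) :
    ∫ v, sasG α s (y - v) ∂ν = s / (s + s') * sasG α (s + s') y := by
  unfold sasG
  rw [integral_const_mul, integral_integral_swap]
  · rw [mul_left_comm, ← integral_const_mul (s / (s + s'))]
    congr 1
    refine setIntegral_congr_fun measurableSet_Ioi fun t ht => ?_
    have ht : 0 < t := ht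
    rw [integral_const_mul, sas_sin_int (h t), abs_of_pos ht,
      show -((s + s') * t ^ α) = -(s * t ^ α) + -(s' * t ^ α) by ring, exp_add]
    have : s + s' ≠ 0 := by positivity
    field_simp
  · have h1 := (integrable_const (μ := ν) (1 : ℝ)).mul_prod (sas_int2 hα hs)
    have h2 : Integrable (fun p : ℝ × ℝ => (1 * (s * α * p.2 ^ (α - 1) * exp (-(s * p.2 ^ α))))
        * sin (p.2 * (y - p.1))) (ν.prod (volume.restrict (Ioi 0))) :=
      h1.mul_bdd (c := 1) (by fun_prop)
        (ae_of_all _ fun t => by simpa using abs_sin_le_one _)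
    simpa [Function.uncurry_def] using h2

lemma sas_cint {α s : ℝ} (hα : 0 < α) (hs : 0 < s) :
    Integrable (fun t : ℝ => exp (-(s * |t| ^ α))) := by
  have h1 : IntegrableOn (fun t : ℝ => exp (-(s * |t| ^ α))) (Ioi 0) :=
    IntegrableOn.congr_fun (sas_int1 hα hs)
      (fun t ht => by rw [abs_of_pos (show 0 < t from ht)]) measurableSet_Ioi
  have h2 : IntegrableOn (fun t : ℝ => exp (-(s * |t| ^ α))) (Iic 0) := by
    rw [integrableOn_Iic_iff_integrableOn_Iio]
    have := (integrable_indicator_iff measurableSet_Ioi).2 h1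
    have := (integrable_indicator_iff measurableSet_Iio).1
      (this.comp_neg.congr (ae_of_all _ fun t => ?_) : Integrable
        ((Iio (0 : ℝ)).indicator (fun t : ℝ => exp (-(s * |t| ^ α)))))
    · exact this
    · simp [indicator_apply]
  rw [← integrableOn_univ, ← Iic_union_Ioi (a := (0 : ℝ))]
  exact h2.union h1

lemma sas_psi_int {α s : ℝ} (hα : 0 < α) (hs : 0 < s) :
    Integrable (fun t : ℝ => ((exp (-(s * |2 * π * t| ^ α)) : ℝ) : ℂ)) :=
  ((sas_cint hα hs).comp_mul_left' (by positivity : 2 * π ≠ 0)).ofReal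

open FourierTransform in
lemma sas_fourier {α s : ℝ} (hα : 0 < α) (hs : 0 < s) (x : ℝ) :
    𝓕 (fun t : ℝ => ((exp (-(s * |2 * π * t| ^ α)) : ℝ) : ℂ)) x = (sasDens α s x : ℂ) := by
  rw [Real.fourier_eq']
  set F : ℝ → ℂ := fun t => Complex.exp (-(t * x : ℝ) * Complex.I) *
    ((exp (-(s * |t| ^ α)) : ℝ) : ℂ) with hF
  have hFi : Integrable F := by
    refine (sas_cint hα hs).ofReal.bdd_mul (c := 1) (by fun_prop) (ae_of_all _ fun t => ?_)
    rw [← Complex.ofReal_neg, Complex.norm_exp_ofReal_mul_I]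
  have h1 : ∀ v : ℝ, Complex.exp (↑(-2 * π * inner ℝ v x) * Complex.I) •
      ((exp (-(s * |2 * π * v| ^ α)) : ℝ) : ℂ) = F (2 * π * v) := by
    intro v
    simp only [hF, smul_eq_mul]
    congr 3
    simp
    ring
  simp_rw [h1]
  rw [Measure.integral_comp_mul_left, ← integral_add_compl measurableSet_Ioi hFi (s := Ioi 0),
    compl_Ioi, ← neg_zero, ← integral_comp_neg_Ioi, neg_zero,
    ← integral_add hFi.integrableOn (hFi.comp_neg).integrableOn]
  have h2 : ∫ t in Ioi (0 : ℝ), F t + F (-t) =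
      ∫ t in Ioi (0 : ℝ), (2 : ℂ) * ((exp (-(s * t ^ α)) * cos (t * x) : ℝ) : ℂ) := by
    refine setIntegral_congr_fun measurableSet_Ioi fun t ht => ?_
    have ht : 0 < t := ht
    simp only [hF, abs_neg, abs_of_pos ht]
    push_cast [Complex.cos]
    rw [show -(-(t : ℂ) * x) = t * x by ring]
    ring
  rw [h2, integral_const_mul, integral_complex_ofReal, abs_of_pos (by positivity)]
  unfold sasDens
  push_cast
  rw [Complex.real_smul]
  push_cast
  have : (π : ℂ) ≠ 0 := by exact_mod_cast pi_ne_zero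
  field_simp
  simp only [mul_comm]

open FourierTransform SchwartzMap in
lemma sas_schwartz {α s : ℝ} (hα : 0 < α) (hs : 0 < s) {ν : Measure ℝ} [IsProbabilityMeasure ν]
    (h : ∀ t, charFun ν t = Complex.exp (-((s * |t| ^ α : ℝ) : ℂ))) (g : 𝓢(ℝ, ℂ)) :
    ∫ x, g x ∂ν = ∫ x, g x * (sasDens α s x : ℂ) := by
  set ψ : ℝ → ℂ := fun t : ℝ => ((exp (-(s * |2 * π * t| ^ α)) : ℝ) : ℂ) with hψ
  have hψi : Integrable ψ := sas_psi_int hα hs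
  have hψ' : ∀ t, VectorFourier.fourierIntegral fourierChar ν (innerₗ ℝ).flip (1 : ℝ → ℂ) t
      = ψ t := by
    intro t
    have := charFun_eq_fourierIntegral' (μ := ν) (-(2 * π) * t)
    rw [h] at this
    have e : -(2 * π)⁻¹ • (-(2 * π) * t) = t := by
      simp only [smul_eq_mul]; field_simp
    rw [e] at this
    rw [flip_innerₗ, ← this]
    simp [hψ, abs_mul]
  have e1 := VectorFourier.integral_fourierIntegral_smul_eq_flip (μ := (volume : Measure ℝ))
    (ν := ν) (L := innerₗ ℝ) (e := fourierChar) (f := (𝓕⁻ g : 𝓢(ℝ, ℂ))) (g := (1 : ℝ → ℂ))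
    Real.continuous_fourierChar continuous_inner (𝓕⁻ g : 𝓢(ℝ, ℂ)).integrable
    (integrable_const (1 : ℂ))
  simp_rw [hψ'] at e1
  have e2 : ∀ x, VectorFourier.fourierIntegral fourierChar (volume : Measure ℝ) (innerₗ ℝ)
      (𝓕⁻ g : 𝓢(ℝ, ℂ)) x = g x := by
    intro x
    change 𝓕 ((𝓕⁻ g : 𝓢(ℝ, ℂ)) : ℝ → ℂ) x = g x
    rw [← SchwartzMap.fourier_coe, FourierTransform.fourier_fourierInv_eq]
  simp_rw [e2] at e1
  simp only [Pi.one_apply, smul_eq_mul, mul_one] at e1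
  rw [e1]
  have e3 := VectorFourier.integral_fourierIntegral_smul_eq_flip (μ := (volume : Measure ℝ))
    (ν := (volume : Measure ℝ)) (L := innerₗ ℝ) (e := fourierChar) (f := g) (g := ψ)
    Real.continuous_fourierChar continuous_inner g.integrable hψi
  have e4 : ∀ x, VectorFourier.fourierIntegral fourierChar (volume : Measure ℝ) (innerₗ ℝ).flip
      ψ x = (sasDens α s x : ℂ) := by
    intro x
    rw [flip_innerₗ, ← sas_fourier hα hs]
    rfl
  simp_rw [e4] at e3
  simp only [smul_eq_mul] at e3
  rw [← e3, ← integral_neg_eq_self]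
  congr 1 with t
  have : ψ (-t) = ψ t := by simp [hψ]
  rw [this]
  congr 1
  rw [SchwartzMap.fourierInv_coe, fourierInv_eq_fourier_neg, neg_neg]
  rfl

lemma sas_density {α s : ℝ} (hα : 0 < α) (hs : 0 < s) {ν : Measure ℝ} [IsProbabilityMeasure ν]
    (h : ∀ t, charFun ν t = Complex.exp (-((s * |t| ^ α : ℝ) : ℂ))) :
    (∀ᵐ x, 0 ≤ sasDens α s x) ∧
      ν = volume.withDensity (fun x => ENNReal.ofReal (sasDens α s x)) := by
  set f := sasDens α s with hf
  have hfm : Measurable f := sasDens_meas α s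
  obtain ⟨C, hC⟩ := sasDens_bdd hα hs
  set m : Measure ℝ := volume + ν with hm
  have hv : (volume : Measure ℝ) ≪ m := Measure.absolutelyContinuous_of_le (Measure.le_add_right le_rfl)
  have hn : ν ≪ m := Measure.absolutelyContinuous_of_le (Measure.le_add_left le_rfl)
  set ρ := ν.rnDeriv m
  set r := (volume : Measure ℝ).rnDeriv m
  have hρm : Measurable ρ := Measure.measurable_rnDeriv _ _
  have hrm : Measurable r := Measure.measurable_rnDeriv _ _
  have key : ∀ᵐ x ∂m, (ρ x).toReal = f x * (r x).toReal := by
    refine ae_eq_of_integral_contDiff_smul_eq (μ := m) ?_ ?_ ?_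
    · exact (Measure.integrable_toReal_rnDeriv).locallyIntegrable
    · have h1 : LocallyIntegrable (fun x => (r x).toReal) m := by
        rw [locallyIntegrable_iff]
        intro k hk
        exact Measure.integrableOn_toReal_rnDeriv hk.measure_lt_top.ne
      rw [locallyIntegrable_iff] at h1 ⊢
      intro k hk
      exact (h1 k hk).bdd_mul (c := C) hfm.aestronglyMeasurable (ae_of_all _ fun x => hC x)
    · intro g hg hgc
      have e1 : ∫ x, g x • (ρ x).toReal ∂m = ∫ x, g x ∂ν := by
        rw [← integral_rnDeriv_smul hn]
        simp only [smul_eq_mul, mul_comm]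
        rfl
      have e2 : ∫ x, g x • (f x * (r x).toReal) ∂m = ∫ x, g x * f x := by
        rw [← integral_rnDeriv_smul hv]
        congr 1 with x
        simp only [smul_eq_mul]
        ring_nf
        rfl
      rw [e1, e2]
      have hgc' : HasCompactSupport (fun x => (g x : ℂ)) :=
        hgc.comp_left (g := fun x : ℝ => (x : ℂ)) Complex.ofReal_zero
      have hg' : ContDiff ℝ (⊤ : ℕ∞) (fun x => (g x : ℂ)) := Complex.ofRealCLM.contDiff.comp hg
      have := sas_schwartz hα hs h (hgc'.toSchwartzMap hg')
      have e : ∀ x, hgc'.toSchwartzMap hg' x = (g x : ℂ) := fun x => rfl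
      simp_rw [e, ← Complex.ofReal_mul] at this
      rw [integral_complex_ofReal, integral_complex_ofReal] at this
      exact_mod_cast this
  have hrt : ∀ᵐ x ∂m, r x < ⊤ := Measure.rnDeriv_lt_top _ _
  have hρt : ∀ᵐ x ∂m, ρ x < ⊤ := Measure.rnDeriv_lt_top _ _
  constructor
  · filter_upwards [hv.ae_le key, hv.ae_le hrt, Measure.rnDeriv_pos hv] with x h1 h2 h3
    have h4 : 0 < (r x).toReal := ENNReal.toReal_pos h3.ne' h2.ne
    have h5 : 0 ≤ f x * (r x).toReal := h1 ▸ ENNReal.toReal_nonneg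
    exact nonneg_of_mul_nonneg_left h5 h4
  · have e : ρ =ᵐ[m] r * fun x => ENNReal.ofReal (f x) := by
      filter_upwards [key, hrt, hρt] with x h1 h2 h3
      rw [← ENNReal.ofReal_toReal h3.ne, h1, ENNReal.ofReal_mul' ENNReal.toReal_nonneg,
        ENNReal.ofReal_toReal h2.ne, Pi.mul_apply, mul_comm]
    rw [← Measure.withDensity_rnDeriv_eq ν m hn, withDensity_congr_ae e,
      withDensity_mul _ hrm (by fun_prop), Measure.withDensity_rnDeriv_eq _ _ hv]

lemma sas_main {α s s' : ℝ} (hα : 0 < α) (hs : 0 < s) (hs' : 0 < s')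
    {ν ν' ν'' : Measure ℝ} [IsProbabilityMeasure ν] [IsProbabilityMeasure ν']
    [IsProbabilityMeasure ν'']
    (h : ∀ t, charFun ν t = Complex.exp (-((s * |t| ^ α : ℝ) : ℂ)))
    (h' : ∀ t, charFun ν' t = Complex.exp (-((s' * |t| ^ α : ℝ) : ℂ)))
    (h'' : ∀ t, charFun ν'' t = Complex.exp (-(((s + s') * |t| ^ α : ℝ) : ℂ)))
    {B : Set ℝ} (hB : MeasurableSet B) (hBf : volume B ≠ ⊤) :
    Integrable (fun p : ℝ × ℝ => B.indicator 1 (p.1 + p.2) * p.1) (ν.prod ν') ∧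
    ∫ p, B.indicator 1 (p.1 + p.2) * p.1 ∂(ν.prod ν') =
      s / (s + s') * ∫ y in B, y ∂ν'' := by
  obtain ⟨hd0, hd⟩ := sas_density hα hs h
  obtain ⟨hd0'', hd''⟩ := sas_density hα (add_pos hs hs') h''
  obtain ⟨C, hC⟩ := sasG_bdd hα hs
  have hGm := sasG_meas hα hs
  have hfm := sasDens_meas α s
  have hfm'' := sasDens_meas α (s + s')
  have hBm : Measurable (B.indicator (1 : ℝ → ℝ)) := measurable_one.indicator hB
  have hm : Measurable (fun p : ℝ × ℝ => B.indicator (1 : ℝ → ℝ) (p.1 + p.2) * p.1) := by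
    fun_prop
  have hint : Integrable (fun p : ℝ × ℝ => B.indicator 1 (p.1 + p.2) * p.1) (ν.prod ν') := by
    refine ⟨hm.aestronglyMeasurable, ?_⟩
    rw [HasFiniteIntegral, lintegral_prod_symm' _ (by fun_prop)]
    have hle : ∀ v : ℝ, ∫⁻ u, ‖B.indicator (1 : ℝ → ℝ) (u + v) * u‖ₑ ∂ν ≤
        ENNReal.ofReal C * volume B := by
      intro v
      rw [hd, lintegral_withDensity_eq_lintegral_mul _ (by fun_prop) (by fun_prop)]
      calc _ ≤ ∫⁻ u, ENNReal.ofReal C * B.indicator 1 (u + v) := by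
            refine lintegral_mono_ae ?_
            filter_upwards [hd0] with u hu
            simp only [Pi.mul_apply]
            by_cases hb : u + v ∈ B
            · simp only [indicator_of_mem hb, Pi.one_apply, one_mul, mul_one]
              rw [Real.enorm_eq_ofReal_abs, ← ENNReal.ofReal_mul hu]
              refine ENNReal.ofReal_le_ofReal ?_
              refine le_trans (le_of_eq ?_) (hC u)
              rw [← sas_mul_dens hα hs, abs_mul, abs_of_nonneg hu, mul_comm]
            · simp [indicator_of_notMem hb]
        _ = ENNReal.ofReal C * ∫⁻ u, B.indicator 1 u := by
            have hBm' : Measurable (B.indicator (1 : ℝ → ENNReal)) :=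
              measurable_one.indicator hB
            rw [lintegral_const_mul _ (by fun_prop),
              lintegral_add_right_eq_self (fun u => B.indicator (1 : ℝ → ENNReal) u) v]
        _ = _ := by rw [lintegral_indicator_one hB]
    refine lt_of_le_of_lt (lintegral_mono hle) ?_
    simp only [lintegral_const, measure_univ, mul_one]
    exact ENNReal.mul_lt_top ENNReal.ofReal_lt_top hBf.lt_top
  refine ⟨hint, ?_⟩
  rw [integral_prod_symm _ hint]
  have e1 : ∀ v : ℝ, ∫ u, B.indicator 1 (u + v) * u ∂ν = ∫ y in B, sasG α s (y - v) := by
    intro v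
    rw [hd, integral_withDensity_eq_integral_toReal_smul (by fun_prop) (by simp),
      ← integral_indicator hB, 
      ← integral_add_right_eq_self (fun y => B.indicator (fun y => sasG α s (y - v)) y) v]
    refine integral_congr_ae ?_
    filter_upwards [hd0] with u hu
    rw [ENNReal.toReal_ofReal hu]
    by_cases hb : u + v ∈ B
    · simp [indicator_of_mem hb, ← sas_mul_dens hα hs, mul_comm]
    · simp [indicator_of_notMem hb]
  simp_rw [e1]
  rw [integral_integral_swap]
  · simp_rw [sasG_conv hα hs hs' h']
    rw [integral_const_mul]
    congr 1
    rw [← integral_indicator hB, ← integral_indicator hB, hd'',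
      integral_withDensity_eq_integral_toReal_smul (by fun_prop) (by simp)]
    refine integral_congr_ae ?_
    filter_upwards [hd0''] with u hu
    rw [ENNReal.toReal_ofReal hu]
    by_cases hb : u ∈ B
    · simp [indicator_of_mem hb, ← sas_mul_dens hα (add_pos hs hs'), mul_comm]
    · simp [indicator_of_notMem hb]
  · have : IsFiniteMeasure (volume.restrict B) := ⟨by simpa using hBf.lt_top⟩
    refine Integrable.of_bound (C := C) ?_ (ae_of_all _ fun p => hC _)
    exact (hGm.comp (by fun_prop : Measurable fun p : ℝ × ℝ => p.2 - p.1)).aestronglyMeasurable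

theorem additiveNoise_condMean_linear
    {Ω : Type*} [MeasurableSpace Ω] {μ : Measure Ω} [IsProbabilityMeasure μ]
    (α γX γZ₂ : ℝ) (hα : α ∈ Set.Ioo (0 : ℝ) 2) (hγX : 0 < γX) (hγZ₂ : 0 < γZ₂)
    (a₂₁ a₂₂ : ℝ) (ha₂₁ : a₂₁ ≠ 0) (ha₂₂ : a₂₂ ≠ 0)
    (X Z₂ : Ω → ℝ) (hX : Measurable X) (hZ₂ : Measurable Z₂)
    (hindep : IndepFun X Z₂ μ)
    (hcharX : ∀ t : ℝ, ∫ ω, Complex.exp (((t * X ω : ℝ) : ℂ) * Complex.I) ∂μ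
      = Complex.exp (-((γX ^ α * |t| ^ α : ℝ) : ℂ)))
    (hcharZ₂ : ∀ t : ℝ, ∫ ω, Complex.exp (((t * Z₂ ω : ℝ) : ℂ) * Complex.I) ∂μ
      = Complex.exp (-((γZ₂ ^ α * |t| ^ α : ℝ) : ℂ)))
    (Y : Ω → ℝ) (hY : Y = fun ω => a₂₁ * X ω + a₂₂ * Z₂ ω) :
    ∀ᵐ y ∂(μ.map Y),
      Integrable (fun x => x) (condDistrib X Y μ y) ∧
      ∫ x, x ∂(condDistrib X Y μ y)
        = (γX ^ α * |a₂₁| ^ α / (γX ^ α * |a₂₁| ^ α + γZ₂ ^ α * |a₂₂| ^ α)) * (y / a₂₁) := by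
  have hα0 : 0 < α := hα.1
  set s := γX ^ α * |a₂₁| ^ α with hs_def
  set s' := γZ₂ ^ α * |a₂₂| ^ α with hs'_def
  have hs : 0 < s := by positivity
  have hs' : 0 < s' := by positivity
  set U : Ω → ℝ := fun ω => a₂₁ * X ω with hU
  set V : Ω → ℝ := fun ω => a₂₂ * Z₂ ω with hV
  have hUm : Measurable U := by fun_prop
  have hVm : Measurable V := by fun_prop
  have hYm : Measurable Y := by rw [hY]; fun_prop
  have hYUV : Y = U + V := hY
  have hUV : IndepFun U V μ := hindep.comp (φ := fun x => a₂₁ * x) (ψ := fun x => a₂₂ * x)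
    (by fun_prop) (by fun_prop)
  have : IsProbabilityMeasure (μ.map U) := Measure.isProbabilityMeasure_map hUm.aemeasurable
  have : IsProbabilityMeasure (μ.map V) := Measure.isProbabilityMeasure_map hVm.aemeasurable
  have : IsProbabilityMeasure (μ.map Y) := Measure.isProbabilityMeasure_map hYm.aemeasurable
  have hcU : ∀ t, charFun (μ.map U) t = Complex.exp (-((s * |t| ^ α : ℝ) : ℂ)) := by
    intro t
    rw [charFun_apply_real, integral_map hUm.aemeasurable (by fun_prop)]
    have := hcharX (t * a₂₁)
    rw [abs_mul, mul_rpow (abs_nonneg _) (abs_nonneg _)] at this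
    convert! this using 1
    · congr 1 with ω
      simp only [hU]; push_cast; ring_nf
    · rw [hs_def]; ring_nf
  have hcV : ∀ t, charFun (μ.map V) t = Complex.exp (-((s' * |t| ^ α : ℝ) : ℂ)) := by
    intro t
    rw [charFun_apply_real, integral_map hVm.aemeasurable (by fun_prop)]
    have := hcharZ₂ (t * a₂₂)
    rw [abs_mul, mul_rpow (abs_nonneg _) (abs_nonneg _)] at this
    convert! this using 1
    · congr 1 with ω
      simp only [hV]; push_cast; ring_nf
    · rw [hs'_def]; ring_nf
  have hcY : ∀ t, charFun (μ.map Y) t = Complex.exp (-(((s + s') * |t| ^ α : ℝ) : ℂ)) := by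
    intro t
    rw [hYUV, hUV.charFun_map_add_eq_mul hUm.aemeasurable hVm.aemeasurable, Pi.mul_apply,
      hcU, hcV, ← Complex.exp_add]
    congr 1; push_cast; ring
  have hprod : μ.map (fun ω => (U ω, V ω)) = (μ.map U).prod (μ.map V) :=
    (indepFun_iff_map_prod_eq_prod_map_map hUm.aemeasurable hVm.aemeasurable).1 hUV
  have hUVm : AEMeasurable (fun ω => (U ω, V ω)) μ := (hUm.prodMk hVm).aemeasurable
  set κ := condDistrib X Y μ with hκ
  have hjoint : (μ.map Y) ⊗ₘ κ = μ.map fun ω => (Y ω, X ω) := compProd_map_condDistrib hX.aemeasurable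
  have hYXm : AEMeasurable (fun ω => (Y ω, X ω)) μ := (hYm.prodMk hX).aemeasurable
  -- joint statement for bounded sets
  have main : ∀ B : Set ℝ, MeasurableSet B → volume B ≠ ⊤ →
      Integrable (fun p : ℝ × ℝ => B.indicator 1 p.1 * p.2) ((μ.map Y) ⊗ₘ κ) ∧
      ∫ p, B.indicator 1 p.1 * p.2 ∂((μ.map Y) ⊗ₘ κ) =
        ∫ y in B, s / (s + s') * (y / a₂₁) ∂(μ.map Y) := by
    intro B hB hBf
    obtain ⟨h1, h2⟩ := sas_main hα0 hs hs' hcU hcV hcY hB hBf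
    have hBm : Measurable (B.indicator (1 : ℝ → ℝ)) := measurable_one.indicator hB
    have hm1 : Measurable (fun p : ℝ × ℝ => B.indicator (1 : ℝ → ℝ) (p.1 + p.2) * p.1) := by
      fun_prop
    have hm2 : Measurable (fun p : ℝ × ℝ => B.indicator (1 : ℝ → ℝ) p.1 * p.2) := by
      fun_prop
    rw [← hprod] at h1 h2
    rw [integrable_map_measure hm1.aestronglyMeasurable hUVm] at h1
    rw [integral_map hUVm hm1.aestronglyMeasurable] at h2
    have e : ∀ ω, B.indicator (1 : ℝ → ℝ) (Y ω) * X ω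
        = a₂₁⁻¹ * (B.indicator (1 : ℝ → ℝ) (U ω + V ω) * U ω) := by
      intro ω
      rw [hYUV, Pi.add_apply]
      simp only [hU]
      field_simp
    rw [hjoint, integrable_map_measure hm2.aestronglyMeasurable hYXm,
      integral_map hYXm hm2.aestronglyMeasurable]
    constructor
    · exact (h1.const_mul a₂₁⁻¹).congr (ae_of_all _ fun ω => (e ω).symm)
    · simp only [e]
      rw [integral_const_mul, h2, integral_const_mul, integral_div]
      field_simp
  have hIcc : ∀ n : ℕ, volume (Icc (-(n : ℝ)) n) ≠ ⊤ := fun n => measure_Icc_lt_top.ne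
  have hI : ∀ᵐ y ∂(μ.map Y), Integrable (fun x => x) (κ y) := by
    have : ∀ n : ℕ, ∀ᵐ y ∂(μ.map Y), Integrable
        (fun x => (Icc (-(n : ℝ)) n).indicator (1 : ℝ → ℝ) y * x) (κ y) := fun n =>
      ((Measure.integrable_compProd_iff
        (main _ measurableSet_Icc (hIcc n)).1.aestronglyMeasurable).1
        (main _ measurableSet_Icc (hIcc n)).1).1
    filter_upwards [ae_all_iff.2 this] with y hy
    obtain ⟨n, hn⟩ := exists_nat_ge |y|
    have := hy n
    rw [indicator_of_mem (show y ∈ Icc (-(n : ℝ)) n from abs_le.1 hn)] at this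
    simpa using this
  -- the conditional mean
  have hset : ∀ B : Set ℝ, MeasurableSet B → volume B ≠ ⊤ →
      IntegrableOn (fun y => ∫ x, x ∂(κ y)) B (μ.map Y) ∧
      ∫ y in B, (∫ x, x ∂(κ y)) ∂(μ.map Y) = ∫ y in B, s / (s + s') * (y / a₂₁) ∂(μ.map Y) := by
    intro B hB hBf
    obtain ⟨h1, h2⟩ := main B hB hBf
    rw [Measure.integral_compProd h1] at h2
    have h3 : Integrable (fun y => ∫ x, B.indicator (1 : ℝ → ℝ) y * x ∂(κ y)) (μ.map Y) := by
      rw [Measure.compProd] at h1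
      simpa [Kernel.prodMkLeft_apply] using Integrable.integral_compProd h1
    have e : (fun y => ∫ x, B.indicator (1 : ℝ → ℝ) y * x ∂(κ y))
        = B.indicator (fun y => ∫ x, x ∂(κ y)) := by
      ext y
      by_cases hb : y ∈ B <;> simp [hb]
    simp only [e] at h2 h3
    rw [integral_indicator hB] at h2
    exact ⟨(integrable_indicator_iff hB).1 h3, h2⟩
  have hM : ∀ᵐ y ∂(μ.map Y), ∫ x, x ∂(κ y) = s / (s + s') * (y / a₂₁) := by
    have : ∀ n : ℕ, ∀ᵐ y ∂(μ.map Y), y ∈ Icc (-(n : ℝ)) n →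
        ∫ x, x ∂(κ y) = s / (s + s') * (y / a₂₁) := by
      intro n
      rw [← ae_restrict_iff' measurableSet_Icc]
      refine Integrable.ae_eq_of_forall_setIntegral_eq _ _
        (hset _ measurableSet_Icc (hIcc n)).1 ?_ ?_
      · exact ContinuousOn.integrableOn_Icc (by fun_prop)
      · intro B hB _
        rw [Measure.restrict_restrict hB]
        exact (hset _ (hB.inter measurableSet_Icc)
          (measure_ne_top_of_subset inter_subset_right (hIcc n))).2
    filter_upwards [ae_all_iff.2 this] with y hy
    obtain ⟨n, hn⟩ := exists_nat_ge |y|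
    exact hy n (abs_le.1 hn)
  filter_upwards [hI, hM] with y h1 h2 using ⟨h1, h2⟩
end

section
/- Derivative of the partially inverted joint characteristic function: let α ∈ (0,2), γ_{Z₁}, γ_{Z₂} > 0, and a₁₁, a₁₂, a₂₁, a₂₂ ∈ ℝ with a₂₁ ≠ 0, a₂₂ ≠ 0, a₁₁a₂₂ − a₁₂a₂₁ ≠ 0. Define φ(t,s) = exp(−γ_{Z₁}^α|a₁₁t + a₂₁s|^α − γ_{Z₂}^α|a₁₂t + a₂₂s|^α) and, for fixed y ∈ ℝ, I(t) = ∫_ℝ φ(t,s)·exp(−i s y) ds (a complex-valued integral). Then I is differentiable at t = 0 with derivative I′(0) = (2i/((|a₂₁|γ_{Z₁})^α + (|a₂₂|γ_{Z₂})^α)) · ((a₁₁/a₂₁)(|a₂₁|γ_{Z₁})^α + (a₁₂/a₂₂)(|a₂₂|γ_{Z₂})^α) · y · ∫₀^∞ exp(−((|a₂₁|γ_{Z₁})^α + (|a₂₂|γ_{Z₂})^α) s^α) cos(s y) ds. -/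
open MeasureTheory Real Set

theorem aux_hasDerivAt (F h D : ℝ → ℂ) (hF : Continuous F) (hF1 : ∀ s, ‖F s‖ ≤ 1)
    (hh : Continuous h) (hhi : Integrable h) (hD : Measurable D) (hDi : Integrable D)
    (hder : ∀ x, x ≠ 0 → HasDerivAt h (D x) x) :
    HasDerivAt (fun t : ℝ => ∫ s : ℝ, F s * h (s + t)) (∫ s : ℝ, F s * D s) 0 := by
  have hint : ∀ t, Integrable (fun s => F s * h (s + t)) := fun t =>
    (hhi.comp_add_right t).bdd_mul (c := 1) hF.aestronglyMeasurable
      (Filter.Eventually.of_forall hF1)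
  have hKc : Continuous (fun r : ℝ => ∫ s : ℝ, F s * D (s + r)) := by
    have h1 : (fun r : ℝ => ∫ s : ℝ, F s * D (s + r)) = fun r => ∫ s : ℝ, F (s - r) * D s := by
      funext r
      rw [← integral_sub_right_eq_self _ r]
      simp
    rw [h1]
    refine continuous_of_dominated (bound := fun s => ‖D s‖) ?_ ?_ hDi.norm ?_
    · intro r
      exact (hF.comp (by fun_prop)).aestronglyMeasurable.mul hD.aestronglyMeasurable
    · intro r
      refine Filter.Eventually.of_forall fun s => ?_
      rw [norm_mul]
      exact mul_le_of_le_one_left (norm_nonneg _) (hF1 _)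
    · refine Filter.Eventually.of_forall fun s => ?_
      fun_prop
  have key : ∀ t : ℝ, (∫ s : ℝ, F s * h (s + t)) =
      (∫ s : ℝ, F s * h s) + ∫ r in (0:ℝ)..t, ∫ s : ℝ, F s * D (s + r) := by
    intro t
    rw [intervalIntegral_integral_swap]
    · have h0 : ∀ s, (∫ r in (0:ℝ)..t, F s * D (s + r)) = F s * h (s + t) - F s * h s := by
        intro s
        rw [intervalIntegral.integral_const_mul, ← mul_sub]
        congr 1
        rw [intervalIntegral.integral_comp_add_left (fun r => D r) s]
        rw [integral_eq_of_hasDerivAt_off_countable h D (countable_singleton (0:ℝ))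
          hh.continuousOn (fun x hx => hder x hx.2) hDi.intervalIntegrable]
        simp
      simp_rw [h0]
      have := hint 0
      simp only [add_zero] at this
      rw [integral_sub (hint t) this]
      ring
    · have hm : Measurable (Function.uncurry fun r s : ℝ => F s * D (s + r)) := by
        have := hF.measurable
        unfold Function.uncurry
        fun_prop
      have hm2 : Measurable (fun p : ℝ × ℝ => D (p.2 + p.1)) := by fun_prop
      have : Integrable (fun p : ℝ × ℝ => D (p.2 + p.1))
          ((volume.restrict (Set.uIoc 0 t)).prod volume) := by
        rw [integrable_prod_iff hm2.aestronglyMeasurable]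
        refine ⟨Filter.Eventually.of_forall fun r => hDi.comp_add_right r, ?_⟩
        simp only [integral_add_right_eq_self (fun s => ‖D s‖)]
        exact Continuous.integrableOn_uIoc (continuous_const (y := ∫ s, ‖D s‖))
      refine this.mono hm.aestronglyMeasurable (Filter.Eventually.of_forall fun p => ?_)
      simp only [Function.uncurry, norm_mul]
      exact mul_le_of_le_one_left (norm_nonneg _) (hF1 _)
  rw [funext key]
  have := (intervalIntegral.integral_hasDerivAt_right (hKc.intervalIntegrable 0 0)
    (hKc.stronglyMeasurableAtFilter _ _) hKc.continuousAt).const_add (∫ s : ℝ, F s * h s)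
  simpa using this

/-- The one-dimensional stable characteristic function. -/
noncomputable def auxE (α c s : ℝ) : ℝ := Real.exp (-(c * |s| ^ α))

/-- Its derivative off zero. -/
noncomputable def auxD (α c s : ℝ) : ℝ :=
  -(c * (α * |s| ^ (α - 2) * s)) * Real.exp (-(c * |s| ^ α))

theorem auxE_cont (α c : ℝ) (hα : 0 < α) : Continuous (auxE α c) := by
  unfold auxE
  have : Continuous (fun s : ℝ => |s| ^ α) := continuous_abs.rpow_const (fun _ => Or.inr hα.le)
  fun_prop

theorem integrable_of_Ioi (f : ℝ → ℝ) (h : ∀ x, |f (-x)| = |f x|) (hm : Measurable f)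
    (hf : IntegrableOn f (Ioi 0)) : Integrable f := by
  rw [← integrableOn_univ, ← Iic_union_Ioi (a := (0:ℝ))]
  refine IntegrableOn.union ?_ hf
  have h2 : IntegrableOn (fun x => f (-x)) (Ioi 0) :=
    Integrable.mono hf (hm.comp measurable_neg).aestronglyMeasurable
      (Filter.Eventually.of_forall fun x => by simpa using (h x).le)
  have := (integrableOn_Ici_iff_integrableOn_Ioi (b := (0:ℝ)) |>.2 h2)
  rw [← Measure.map_neg_eq_self (volume : Measure ℝ)]
  let m : MeasurableEmbedding fun x : ℝ => -x := (Homeomorph.neg ℝ).measurableEmbedding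
  rw [m.integrableOn_map_iff]
  simpa [Function.comp_def] using this

theorem auxE_int (α c : ℝ) (hα : 0 < α) (hc : 0 < c) : Integrable (auxE α c) := by
  refine integrable_of_Ioi _ (by simp [auxE]) (auxE_cont α c hα).measurable ?_
  have h1 : IntegrableOn (fun x : ℝ => Real.exp (-c * x ^ α)) (Ioi 0) := by
    by_contra hn
    have h2 := integral_undef hn
    rw [integral_exp_neg_mul_rpow hα hc] at h2
    have : 0 < c ^ (-1 / α) * Real.Gamma (1 / α + 1) :=
      mul_pos (rpow_pos_of_pos hc _) (Real.Gamma_pos_of_pos (by positivity))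
    exact this.ne' h2
  refine h1.congr_fun (fun x hx => ?_) measurableSet_Ioi
  simp [auxE, abs_of_pos (mem_Ioi.1 hx)]

theorem auxE_deriv (α c x : ℝ) (hx : x ≠ 0) : HasDerivAt (auxE α c) (auxD α c x) x := by
  have h1 := (hasDerivAt_abs hx).rpow_const (p := α) (Or.inl (abs_ne_zero.2 hx))
  have h2 := ((h1.const_mul c).neg).exp
  refine HasDerivAt.congr_deriv (f := auxE α c) h2 ?_
  unfold auxD
  simp only [Pi.neg_apply]
  have h3 : |x| ^ (α - 1) = |x| ^ (α - 2) * |x| := by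
    rw [← rpow_add_one (abs_ne_zero.2 hx)]; congr 1; ring
  have h4 : (SignType.sign x : ℝ) * |x| = x := sign_mul_abs x
  rw [h3]
  linear_combination (-(Real.exp (-(c * |x| ^ α))) * c * α * |x| ^ (α-2)) * h4

theorem auxD_meas (α c : ℝ) : Measurable (auxD α c) := by
  unfold auxD
  fun_prop

theorem auxD_int (α c : ℝ) (hα : 0 < α) (hc : 0 < c) : Integrable (auxD α c) := by
  refine integrable_of_Ioi _ (by simp [auxD, abs_mul]) (auxD_meas α c) ?_
  refine integrableOn_Ioi_deriv_of_nonpos (g := auxE α c) (l := 0)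
    (auxE_cont α c hα).continuousWithinAt (fun x hx => auxE_deriv α c x (ne_of_gt hx)) ?_ ?_
  · intro x hx
    have hx : 0 < x := hx
    unfold auxD
    have : 0 ≤ (c * (α * |x| ^ (α - 2) * x)) * Real.exp (-(c * |x| ^ α)) := by positivity
    linarith
  · unfold auxE
    refine Real.tendsto_exp_neg_atTop_nhds_zero.comp ?_
    exact ((tendsto_rpow_atTop hα).comp Filter.tendsto_abs_atTop_atTop).const_mul_atTop hc

theorem aux_lem (α c : ℝ) (hα : 0 < α) (hc : 0 < c) (F : ℝ → ℂ) (hF : Continuous F)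
    (hF1 : ∀ s, ‖F s‖ ≤ 1) :
    HasDerivAt (fun t : ℝ => ∫ s : ℝ, F s * (auxE α c (s + t) : ℂ))
      (∫ s : ℝ, F s * (auxD α c s : ℂ)) 0 :=
  aux_hasDerivAt F (fun s => auxE α c s) (fun s => auxD α c s) hF hF1
    (Complex.continuous_ofReal.comp (auxE_cont α c hα)) (auxE_int α c hα hc).ofReal
    (Complex.measurable_ofReal.comp (auxD_meas α c)) (auxD_int α c hα hc).ofReal
    (fun x hx => (auxE_deriv α c x hx).ofReal_comp)

/-- The oscillating factor. -/
noncomputable def auxX (y s : ℝ) : ℂ := Complex.exp (-(((s * y : ℝ) : ℂ) * Complex.I))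

theorem auxX_cont (y : ℝ) : Continuous (auxX y) := by
  unfold auxX; fun_prop

theorem auxX_norm (y s : ℝ) : ‖auxX y s‖ = 1 := by
  unfold auxX
  rw [← neg_mul, ← Complex.ofReal_neg]
  exact Complex.norm_exp_ofReal_mul_I _

theorem auxX_add (y s t : ℝ) : auxX y (s + t) = auxX y s * auxX y t := by
  unfold auxX
  rw [← Complex.exp_add]; congr 1; push_cast; ring

theorem auxX_deriv (y b : ℝ) :
    HasDerivAt (fun t : ℝ => auxX y (-(b * t))) (b * y * Complex.I) 0 := by
  unfold auxX
  have h0 : HasDerivAt (fun t : ℝ => (t : ℂ) * (b * y * Complex.I)) (1 * (b * y * Complex.I)) 0 :=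
    (hasDerivAt_id (0:ℝ)).ofReal_comp.mul_const _
  have h1 := h0.cexp
  simp only [Complex.ofReal_zero, zero_mul, Complex.exp_zero, one_mul] at h1
  convert h1 using 3
  push_cast; ring

theorem aux_parts (α c y : ℝ) (hα : 0 < α) (hc : 0 < c) :
    (∫ s : ℝ, auxX y s * (auxD α c s : ℂ)) =
      y * Complex.I * ∫ s : ℝ, auxX y s * (auxE α c s : ℂ) := by
  have h1 := aux_lem α c hα hc (auxX y) (auxX_cont y) (fun s => (auxX_norm y s).le)
  have h2 := (auxX_deriv y 1).mul_const (∫ s : ℝ, auxX y s * (auxE α c s : ℂ))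
  have h3 : (fun t : ℝ => ∫ s : ℝ, auxX y s * (auxE α c (s + t) : ℂ)) =
      fun t : ℝ => auxX y (-(1 * t)) * ∫ s : ℝ, auxX y s * (auxE α c s : ℂ) := by
    funext t
    rw [← integral_const_mul, ← integral_sub_right_eq_self _ t]
    congr 1; funext s
    rw [sub_eq_add_neg, auxX_add]
    simp; ring
  rw [h3] at h1
  simpa using h1.unique h2

theorem aux_cos (α c y : ℝ) (hα : 0 < α) (hc : 0 < c) :
    (∫ s : ℝ, auxX y s * (auxE α c s : ℂ)) =
      2 * ((∫ s in Ioi (0 : ℝ), Real.exp (-(c * s ^ α)) * Real.cos (s * y) : ℝ) : ℂ) := by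
  have hi : Integrable (fun s : ℝ => auxX y s * (auxE α c s : ℂ)) :=
    (auxE_int α c hα hc).ofReal.bdd_mul (c := 1) (auxX_cont y).aestronglyMeasurable
      (Filter.Eventually.of_forall fun s => (auxX_norm y s).le)
  have h1 := integral_comp_abs (f := fun s : ℝ => Real.exp (-(c * s ^ α)) * Real.cos (s * y))
  have h2 : ∀ s : ℝ, ((Real.exp (-(c * |s| ^ α)) * Real.cos (|s| * y) : ℝ) : ℂ)
      = (auxX y s * (auxE α c s : ℂ) + auxX y (-s) * (auxE α c (-s) : ℂ)) / 2 := by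
    intro s
    have : Real.cos (|s| * y) = Real.cos (s * y) := by
      rcases abs_choice s with h | h <;> rw [h]
      rw [neg_mul, Real.cos_neg]
    rw [this]
    simp only [auxE, auxX, abs_neg]
    push_cast
    rw [Complex.cos]
    ring_nf
  have h3 : (∫ s : ℝ, auxX y (-s) * (auxE α c (-s) : ℂ)) =
      ∫ s : ℝ, auxX y s * (auxE α c s : ℂ) :=
    integral_neg_eq_self (fun s => auxX y s * (auxE α c s : ℂ)) volume
  have h4 : (2:ℂ) * ((∫ s in Ioi (0 : ℝ), Real.exp (-(c * s ^ α)) * Real.cos (s * y) : ℝ) : ℂ)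
     = ((2 * (∫ s in Ioi (0 : ℝ), Real.exp (-(c * s ^ α)) * Real.cos (s * y)) : ℝ) : ℂ) := by
    push_cast; rfl
  rw [h4, ← h1, ← integral_complex_ofReal]
  simp_rw [h2]
  rw [integral_div, integral_add hi hi.comp_neg, h3]
  ring

theorem aux_main (α c₁ c₂ b₁ b₂ y : ℝ) (hα : 0 < α) (hc₁ : 0 < c₁) (hc₂ : 0 < c₂) :
    HasDerivAt (fun t : ℝ => ∫ s : ℝ,
        ((auxE α c₁ (s + b₁ * t) * auxE α c₂ (s + b₂ * t) : ℝ) : ℂ) * auxX y s)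
      ((2 * Complex.I / ((c₁ + c₂ : ℝ) : ℂ)) * ((b₁ * c₁ + b₂ * c₂ : ℝ) : ℂ) * (y : ℂ)
        * ((∫ s in Ioi (0 : ℝ), Real.exp (-((c₁ + c₂) * s ^ α)) * Real.cos (s * y) : ℝ) : ℂ))
      0 := by
  have hE1 : ∀ s, ‖((auxE α c₁ s : ℝ) : ℂ)‖ ≤ 1 := by
    intro s
    rw [Complex.norm_real, Real.norm_eq_abs, auxE, Real.abs_exp, Real.exp_le_one_iff]
    have : 0 ≤ c₁ * |s| ^ α := by positivity
    linarith
  have hsum : ∀ s, auxE α c₁ s * auxE α c₂ s = auxE α (c₁ + c₂) s := by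
    intro s; simp only [auxE]; rw [← Real.exp_add]; congr 1; ring
  have hD : ∀ s, auxE α c₁ s * auxD α c₂ s = c₂ / (c₁ + c₂) * auxD α (c₁ + c₂) s := by
    intro s
    have hne : c₁ + c₂ ≠ 0 := by positivity
    have h := hsum s
    simp only [auxE] at h
    simp only [auxE, auxD]
    rw [← h]
    field_simp
  let F : ℝ → ℂ := fun s => auxX y s * (auxE α c₁ s : ℂ)
  have h1 := aux_lem α c₂ hα hc₂ F
    ((auxX_cont y).mul (Complex.continuous_ofReal.comp (auxE_cont α c₁ hα)))
    (fun s => by simp only [F, norm_mul, auxX_norm, one_mul]; exact hE1 s)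
  have hlin : HasDerivAt (fun t : ℝ => (b₂ - b₁) * t) (b₂ - b₁) 0 := by
    simpa using (hasDerivAt_id (0:ℝ)).const_mul (b₂ - b₁)
  have h2 := HasDerivAt.scomp_of_eq (0:ℝ) h1 hlin (by simp)
  have h3 := (auxX_deriv y b₁).mul h2
  have hfun : (fun t : ℝ => ∫ s : ℝ,
        ((auxE α c₁ (s + b₁ * t) * auxE α c₂ (s + b₂ * t) : ℝ) : ℂ) * auxX y s) =
      (fun t : ℝ => auxX y (-(b₁ * t))) *
       ((fun t : ℝ => ∫ s : ℝ, F s * (auxE α c₂ (s + t) : ℂ)) ∘ fun t : ℝ => (b₂ - b₁) * t) := by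
    funext t
    simp only [Pi.mul_apply, Function.comp]
    rw [← integral_const_mul, ← integral_sub_right_eq_self _ (b₁ * t)]
    congr 1; funext s
    simp only [F]
    rw [show s - b₁ * t + b₁ * t = s by ring,
      show s - b₁ * t + b₂ * t = s + (b₂ - b₁) * t by ring, sub_eq_add_neg s (b₁ * t), auxX_add]
    push_cast; ring
  rw [hfun]
  refine h3.congr_deriv ?_
  have hA : (∫ s : ℝ, F s * (auxD α c₂ s : ℂ)) = ((c₂ / (c₁ + c₂) : ℝ) : ℂ) *
      ∫ s : ℝ, auxX y s * (auxD α (c₁ + c₂) s : ℂ) := by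
    rw [← integral_const_mul]
    congr 1; funext s
    simp only [F]
    rw [mul_assoc, ← Complex.ofReal_mul, hD]
    push_cast; ring
  have hB : (∫ s : ℝ, F s * (auxE α c₂ s : ℂ)) =
      ∫ s : ℝ, auxX y s * (auxE α (c₁ + c₂) s : ℂ) := by
    congr 1; funext s
    simp only [F]
    rw [mul_assoc, ← Complex.ofReal_mul, hsum]
  have hX0 : auxX y 0 = 1 := by simp [auxX]
  simp only [Function.comp, mul_zero, add_zero, neg_zero, hX0]
  rw [hA, hB, aux_parts α _ y hα (by positivity), aux_cos α _ y hα (by positivity)]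
  have hne : ((c₁ : ℂ) + c₂) ≠ 0 := by
    rw [← Complex.ofReal_add]; exact_mod_cast (by positivity : c₁ + c₂ ≠ 0)
  rw [Complex.real_smul]
  generalize (∫ s in Ioi (0 : ℝ), Real.exp (-((c₁ + c₂) * s ^ α)) * Real.cos (s * y)) = W
  push_cast
  field_simp
  ring

/-- Derivative at `t = 0` of the partially inverted joint characteristic function
`I(t) = ∫_ℝ φ(t,s) e^{−isy} ds`, where `φ` is the joint characteristic function of the
linear-mix stable vector. -/
theorem deriv_partially_inverted_charFun
    (α γ₁ γ₂ : ℝ) (hα : α ∈ Set.Ioo (0 : ℝ) 2) (hγ₁ : 0 < γ₁) (hγ₂ : 0 < γ₂)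
    (a₁₁ a₁₂ a₂₁ a₂₂ : ℝ) (ha₂₁ : a₂₁ ≠ 0) (ha₂₂ : a₂₂ ≠ 0)
    (hdet : a₁₁ * a₂₂ - a₁₂ * a₂₁ ≠ 0)
    (y : ℝ) (I : ℝ → ℂ)
    (hI : I = fun t => ∫ s : ℝ,
      ((Real.exp (-(γ₁ ^ α * |a₁₁ * t + a₂₁ * s| ^ α + γ₂ ^ α * |a₁₂ * t + a₂₂ * s| ^ α)) : ℝ) : ℂ)
        * Complex.exp (-(((s * y : ℝ) : ℂ) * Complex.I))) :
    HasDerivAt I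
      ((2 * Complex.I / (((|a₂₁| * γ₁) ^ α + (|a₂₂| * γ₂) ^ α : ℝ) : ℂ))
        * (((a₁₁ / a₂₁) * (|a₂₁| * γ₁) ^ α + (a₁₂ / a₂₂) * (|a₂₂| * γ₂) ^ α : ℝ) : ℂ)
        * ((y : ℝ) : ℂ)
        * ((∫ s in Ioi (0 : ℝ),
            Real.exp (-(((|a₂₁| * γ₁) ^ α + (|a₂₂| * γ₂) ^ α) * s ^ α)) * Real.cos (s * y) : ℝ) : ℂ))
      0 := by
  have hα0 : 0 < α := hα.1
  have hmain := aux_main α ((|a₂₁| * γ₁) ^ α) ((|a₂₂| * γ₂) ^ α) (a₁₁ / a₂₁) (a₁₂ / a₂₂) y hα0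
    (rpow_pos_of_pos (mul_pos (abs_pos.2 ha₂₁) hγ₁) _)
    (rpow_pos_of_pos (mul_pos (abs_pos.2 ha₂₂) hγ₂) _)
  have hk : ∀ (γ a b s t : ℝ), 0 < γ → a ≠ 0 →
      γ ^ α * |b * t + a * s| ^ α = (|a| * γ) ^ α * |s + b / a * t| ^ α := by
    intro γ a b s t hγ ha
    have h1 : b * t + a * s = a * (s + b / a * t) := by field_simp; ring
    rw [h1, abs_mul, mul_rpow (abs_nonneg _) (abs_nonneg _), mul_rpow (abs_nonneg _) hγ.le]
    ring
  have hfun : I = fun t : ℝ => ∫ s : ℝ,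
        ((auxE α ((|a₂₁| * γ₁) ^ α) (s + a₁₁ / a₂₁ * t) *
          auxE α ((|a₂₂| * γ₂) ^ α) (s + a₁₂ / a₂₂ * t) : ℝ) : ℂ) * auxX y s := by
    rw [hI]
    funext t
    congr 1; funext s
    rw [hk γ₁ a₂₁ a₁₁ s t hγ₁ ha₂₁, hk γ₂ a₂₂ a₁₂ s t hγ₂ ha₂₂]
    simp only [auxE, auxX]
    rw [← Real.exp_add, neg_add]
  rw [hfun]
  exact hmain
end

section
/- Conditional representation for the sub-Gaussian model: under the sub-Gaussian model with |ρ| < 1, for (μ.map Y)-almost every y ∈ ℝ, the conditional law of X given Y = y satisfies condDistrib X Y μ y = Measure.map (fun (a, z) ↦ β·y + √a·z) ((condDistrib A Y μ y).prod (gaussianReal 0 (σ₁²(1−ρ²)))), where β = ρ·σ₁/σ₂; that is, conditionally on Y = y, X is distributed as β·y + √(A_y)·Z with A_y ~ condDistrib A Y μ y independent of Z ~ N(0, σ₁²(1−ρ²)). -/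
open MeasureTheory ProbabilityTheory Real Set

theorem aux_gauss
    {Ω : Type*} [MeasurableSpace Ω] {μ : Measure Ω} [IsProbabilityMeasure μ]
    (ρ σ₁ σ₂ : ℝ) (hσ₂ : 0 < σ₂) (hρ : |ρ| < 1)
    (G₁ G₂ : Ω → ℝ) (hG₁ : Measurable G₁) (hG₂ : Measurable G₂)
    (hGauss : ∀ t s : ℝ, ∫ ω, Complex.exp (((t * G₁ ω + s * G₂ ω : ℝ) : ℂ) * Complex.I) ∂μ
      = Complex.exp (-(((σ₁ ^ 2 * t ^ 2 + 2 * ρ * σ₁ * σ₂ * t * s + σ₂ ^ 2 * s ^ 2) / 2 : ℝ) : ℂ))) :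
    μ.map (fun ω => (G₂ ω, G₁ ω - (ρ * σ₁ / σ₂) * G₂ ω)) =
      (μ.map G₂).prod (gaussianReal 0 (Real.toNNReal (σ₁ ^ 2 * (1 - ρ ^ 2)))) := by
  have hρ2 : 0 ≤ σ₁ ^ 2 * (1 - ρ ^ 2) := by
    have := (sq_lt_one_iff_abs_lt_one ρ).2 hρ
    have h1 : 0 ≤ 1 - ρ ^ 2 := by linarith
    positivity
  have hσ : σ₂ ≠ 0 := hσ₂.ne'
  have hZm : Measurable (fun ω => G₁ ω - (ρ * σ₁ / σ₂) * G₂ ω) := by fun_prop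
  have key : ∀ t s : ℝ, ∫ ω, Complex.exp
      (((s * G₂ ω + t * (G₁ ω - (ρ * σ₁ / σ₂) * G₂ ω) : ℝ) : ℂ) * Complex.I) ∂μ
      = Complex.exp (-(((σ₁ ^ 2 * (1 - ρ ^ 2)) * t ^ 2 / 2 + σ₂ ^ 2 * s ^ 2 / 2 : ℝ) : ℂ)) := by
    intro t s
    have h := hGauss t (s - t * (ρ * σ₁ / σ₂))
    convert h using 5
    · ring
    · field_simp
      ring
  have hG2 : ∀ s, charFun (μ.map G₂) s = Complex.exp (-((σ₂ ^ 2 * s ^ 2 / 2 : ℝ) : ℂ)) := by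
    intro s
    rw [charFun_apply_real, integral_map hG₂.aemeasurable (by fun_prop)]
    have := key 0 s
    simpa using this
  have hZ : ∀ t, charFun (μ.map (fun ω => G₁ ω - (ρ * σ₁ / σ₂) * G₂ ω)) t =
      Complex.exp (-(((σ₁ ^ 2 * (1 - ρ ^ 2)) * t ^ 2 / 2 : ℝ) : ℂ)) := by
    intro t
    rw [charFun_apply_real, integral_map hZm.aemeasurable (by fun_prop)]
    have := key t 0
    simpa using this
  have hlaw : μ.map (fun ω => G₁ ω - (ρ * σ₁ / σ₂) * G₂ ω) =
      gaussianReal 0 (Real.toNNReal (σ₁ ^ 2 * (1 - ρ ^ 2))) := by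
    have : IsProbabilityMeasure (μ.map (fun ω => G₁ ω - (ρ * σ₁ / σ₂) * G₂ ω)) :=
      Measure.isProbabilityMeasure_map hZm.aemeasurable
    apply Measure.ext_of_charFun
    ext t
    rw [hZ, charFun_gaussianReal]
    congr 1
    have e : (((σ₁ ^ 2 * (1 - ρ ^ 2)).toNNReal : ℝ) : ℂ) = ((σ₁ ^ 2 * (1 - ρ ^ 2) : ℝ) : ℂ) := by
      rw [Real.coe_toNNReal _ hρ2]
    rw [e]
    push_cast
    ring
  rw [← hlaw]
  have hind : IndepFun G₂ (fun ω => G₁ ω - (ρ * σ₁ / σ₂) * G₂ ω) μ := by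
    rw [indepFun_iff_charFun_prod hG₂.aemeasurable hZm.aemeasurable]
    intro t
    rw [hG2, hZ, ← Complex.exp_add, charFun_apply, integral_map (by fun_prop) (by fun_prop)]
    have := key t.ofLp.2 t.ofLp.1
    simp only [WithLp.prod_inner_apply]
    convert this using 2
    · funext ω
      congr 3
    · rw [Complex.ofReal_add]
      ring
  exact hind.map_prod_eq_prod_map_map hG₂.aemeasurable hZm.aemeasurable

/-- Conditional representation for the sub-Gaussian SαS model `X = √A·G₁`, `Y = √A·G₂`
(with `|ρ| < 1`): conditionally on `Y = y`, `X` is distributed as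
`β·y + √(A_y)·Z` where `β = ρσ₁/σ₂`, `A_y ~ condDistrib A Y μ y` and,
independently, `Z ~ N(0, σ₁²(1−ρ²))`. -/
theorem subGaussian_conditional_representation
    {Ω : Type*} [MeasurableSpace Ω] {μ : Measure Ω} [IsProbabilityMeasure μ]
    (α ρ σ₁ σ₂ : ℝ) (hα : α ∈ Set.Ioo (0 : ℝ) 2)
    (hσ₁ : 0 < σ₁) (hσ₂ : 0 < σ₂) (hρ : |ρ| < 1)
    (A G₁ G₂ : Ω → ℝ) (hA : Measurable A) (hG₁ : Measurable G₁) (hG₂ : Measurable G₂)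
    (hApos : ∀ ω, 0 ≤ A ω)
    (hLaplace : ∀ u : ℝ, 0 ≤ u → ∫ ω, Real.exp (-u * A ω) ∂μ
      = Real.exp (-(Real.cos (π * α / 4) ^ (2 / α) * u) ^ (α / 2)))
    (hGauss : ∀ t s : ℝ, ∫ ω, Complex.exp (((t * G₁ ω + s * G₂ ω : ℝ) : ℂ) * Complex.I) ∂μ
      = Complex.exp (-(((σ₁ ^ 2 * t ^ 2 + 2 * ρ * σ₁ * σ₂ * t * s + σ₂ ^ 2 * s ^ 2) / 2 : ℝ) : ℂ)))
    (hindep : IndepFun A (fun ω => (G₁ ω, G₂ ω)) μ)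
    (X Y : Ω → ℝ) (hX : X = fun ω => Real.sqrt (A ω) * G₁ ω)
    (hY : Y = fun ω => Real.sqrt (A ω) * G₂ ω) :
    ∀ᵐ y ∂(μ.map Y),
      condDistrib X Y μ y
        = Measure.map (fun p : ℝ × ℝ => (ρ * σ₁ / σ₂) * y + Real.sqrt p.1 * p.2)
            ((condDistrib A Y μ y).prod
              (gaussianReal 0 (Real.toNNReal (σ₁ ^ 2 * (1 - ρ ^ 2))))) := by
  subst hX hY
  set β : ℝ := ρ * σ₁ / σ₂ with hβ
  set g := gaussianReal 0 (Real.toNNReal (σ₁ ^ 2 * (1 - ρ ^ 2))) with hg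
  set Y : Ω → ℝ := fun ω => Real.sqrt (A ω) * G₂ ω with hYdef
  have hYm : Measurable Y := by fun_prop
  have hjoint := aux_gauss ρ σ₁ σ₂ hσ₂ hρ G₁ G₂ hG₁ hG₂ hGauss
  have hAm : IsProbabilityMeasure (μ.map A) := Measure.isProbabilityMeasure_map hA.aemeasurable
  have hGm : IsProbabilityMeasure (μ.map G₂) := Measure.isProbabilityMeasure_map hG₂.aemeasurable
  rw [← hβ, ← hg] at hjoint
  have hind2 : IndepFun A (fun ω => (G₂ ω, G₁ ω - β * G₂ ω)) μ :=
    hindep.comp (φ := id) (ψ := fun p : ℝ × ℝ => (p.2, p.1 - β * p.2)) measurable_id (by fun_prop)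
  have h3 : μ.map (fun ω => (A ω, (G₂ ω, G₁ ω - β * G₂ ω))) =
      (μ.map A).prod ((μ.map G₂).prod g) := by
    rw [hind2.map_prod_eq_prod_map_map hA.aemeasurable (by fun_prop), hjoint]
  have h2 : μ.map (fun ω => (A ω, G₂ ω)) = (μ.map A).prod (μ.map G₂) := by
    have : IndepFun A G₂ μ := hindep.comp (φ := id) (ψ := Prod.snd) measurable_id measurable_snd
    exact this.map_prod_eq_prod_map_map hA.aemeasurable hG₂.aemeasurable
  have key : ∀ F : (ℝ × ℝ) × ℝ → ENNReal, Measurable F →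
      ∫⁻ ω, F ((Y ω, A ω), G₁ ω - β * G₂ ω) ∂μ = ∫⁻ ω, ∫⁻ z, F ((Y ω, A ω), z) ∂g ∂μ := by
    intro F hF
    have e1 : ∫⁻ ω, F ((Y ω, A ω), G₁ ω - β * G₂ ω) ∂μ =
        ∫⁻ p, F ((√p.1 * p.2.1, p.1), p.2.2) ∂(μ.map (fun ω => (A ω, (G₂ ω, G₁ ω - β * G₂ ω)))) := by
      rw [lintegral_map (by fun_prop) (by fun_prop)]
    have e2 : ∫⁻ ω, ∫⁻ z, F ((Y ω, A ω), z) ∂g ∂μ =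
        ∫⁻ p, ∫⁻ z, F ((√p.1 * p.2, p.1), z) ∂g ∂(μ.map (fun ω => (A ω, G₂ ω))) := by
      rw [lintegral_map _ (by fun_prop)]
      exact Measurable.lintegral_prod_right' (f := fun q : (ℝ × ℝ) × ℝ =>
        F ((√q.1.1 * q.1.2, q.1.1), q.2)) (by fun_prop)
    have hm : Measurable (fun p : ℝ × ℝ => ∫⁻ z, F ((√p.1 * p.2, p.1), z) ∂g) :=
      Measurable.lintegral_prod_right' (f := fun q : (ℝ × ℝ) × ℝ =>
        F ((√q.1.1 * q.1.2, q.1.1), q.2)) (by fun_prop)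
    rw [e1, e2, h3, h2, lintegral_prod _ (by fun_prop), lintegral_prod _ hm.aemeasurable]
    refine lintegral_congr fun a => ?_
    rw [lintegral_prod _ (by fun_prop)]
  let κ := condDistrib A Y μ
  let f : ℝ × (ℝ × ℝ) → ℝ := fun p => β * p.1 + √p.2.1 * p.2.2
  have hf : Measurable f := by fun_prop
  let η : Kernel ℝ ℝ := (Kernel.id ×ₖ (κ ×ₖ Kernel.const ℝ g)).map f
  have : IsMarkovKernel η := Kernel.IsMarkovKernel.map _ hf
  have hη : ∀ y, η y = Measure.map (fun p : ℝ × ℝ => β * y + √p.1 * p.2) ((κ y).prod g) := by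
    intro y
    simp only [η]
    rw [Kernel.map_apply _ hf, Kernel.prod_apply, Kernel.prod_apply, Kernel.id_apply,
      Kernel.const_apply, Measure.dirac_prod, Measure.map_map hf (by fun_prop)]
    rfl
  have hX0 : Measurable (fun ω => √(A ω) * G₁ ω) := by fun_prop
  have hmain : μ.map (fun ω => (Y ω, √(A ω) * G₁ ω)) = μ.map Y ⊗ₘ η := by
    refine Measure.ext_of_lintegral _ fun h hh => ?_
    rw [lintegral_map hh (by fun_prop), Measure.lintegral_compProd hh]
    have e1 : ∫⁻ ω, h (Y ω, √(A ω) * G₁ ω) ∂μ =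
        ∫⁻ ω, (fun q : (ℝ × ℝ) × ℝ => h (q.1.1, β * q.1.1 + √q.1.2 * q.2))
          ((Y ω, A ω), G₁ ω - β * G₂ ω) ∂μ := by
      refine lintegral_congr fun ω => ?_
      congr 2
      simp only [hYdef]
      ring
    refine (e1.trans (key (fun q : (ℝ × ℝ) × ℝ => h (q.1.1, β * q.1.1 + √q.1.2 * q.2)) (by fun_prop))).trans ?_
    have hm : Measurable (fun p : ℝ × ℝ => ∫⁻ z, h (p.1, β * p.1 + √p.2 * z) ∂g) :=
      Measurable.lintegral_prod_right' (f := fun q : (ℝ × ℝ) × ℝ =>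
        h (q.1.1, β * q.1.1 + √q.1.2 * q.2)) (by fun_prop)
    have e2 : ∫⁻ ω, ∫⁻ z, h (Y ω, β * Y ω + √(A ω) * z) ∂g ∂μ =
        ∫⁻ p, ∫⁻ z, h (p.1, β * p.1 + √p.2 * z) ∂g ∂(μ.map (fun ω => (Y ω, A ω))) := by
      rw [lintegral_map hm (by fun_prop)]
    refine e2.trans ?_
    rw [← compProd_map_condDistrib hA.aemeasurable, Measure.lintegral_compProd hm]
    refine lintegral_congr fun y => ?_
    rw [hη, lintegral_map (by fun_prop) (by fun_prop), lintegral_prod _ (by fun_prop)]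
  have := condDistrib_ae_eq_of_measure_eq_compProd Y hX0.aemeasurable hmain
  filter_upwards [this] with y hy
  rw [hy, hη]
end

section
/- Linearity of the conditional mean in the sub-Gaussian model: under the sub-Gaussian model, for (μ.map Y)-almost every y ∈ ℝ, the identity function is integrable with respect to condDistrib X Y μ y and ∫ x d(condDistrib X Y μ y)(x) = (ρ·σ₁/σ₂)·y. -/
open MeasureTheory ProbabilityTheory Real Set

lemma aux_abstract {Ω : Type*} [MeasurableSpace Ω] {μ : Measure Ω} [IsProbabilityMeasure μ]
    {X Y : Ω → ℝ} (hX : Measurable X) (hY : Measurable Y) (c : ℝ)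
    (hint : ∀ n : ℕ, Integrable (fun ω => (Icc (-(n:ℝ)) n).indicator (fun _ => (1:ℝ)) (Y ω) * (X ω - c * Y ω)) μ)
    (hzero : ∀ (n : ℕ) (s : Set ℝ), MeasurableSet s →
      ∫ ω in Y ⁻¹' s, (Icc (-(n:ℝ)) n).indicator (fun _ => (1:ℝ)) (Y ω) * (X ω - c * Y ω) ∂μ = 0) :
    ∀ᵐ y ∂(μ.map Y),
      Integrable (fun x => x) (condDistrib X Y μ y) ∧
      ∫ x, x ∂(condDistrib X Y μ y) = c * y := by
  have : IsProbabilityMeasure (μ.map Y) := Measure.isProbabilityMeasure_map hY.aemeasurable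
  have key : ∀ n : ℕ, ∀ᵐ y ∂(μ.map Y), y ∈ Icc (-(n:ℝ)) n →
      Integrable (fun x => x) (condDistrib X Y μ y) ∧
      ∫ x, x ∂(condDistrib X Y μ y) = c * y := by
    intro n
    set f : ℝ × ℝ → ℝ := fun p => (Icc (-(n:ℝ)) n).indicator (fun _ => (1:ℝ)) p.1 * (p.2 - c * p.1) with hf
    have hfm : Measurable f := by
      have : Measurable ((Icc (-(n:ℝ)) n).indicator (fun _ => (1:ℝ))) :=
        measurable_const.indicator measurableSet_Icc
      fun_prop
    have hfi : Integrable f (μ.map Y ⊗ₘ condDistrib X Y μ) := by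
      rw [compProd_map_condDistrib hX.aemeasurable,
        integrable_map_measure hfm.aestronglyMeasurable (hY.prodMk hX).aemeasurable]
      exact hint n
    have h1 := ((Measure.integrable_compProd_iff hfm.aestronglyMeasurable).1 hfi).1
    have hfi2 : Integrable (fun y => ∫ x, f (y, x) ∂(condDistrib X Y μ y)) (μ.map Y) :=
      MeasureTheory.Integrable.integral_compProd (κ := Kernel.const Unit (μ.map Y))
        (η := Kernel.prodMkLeft Unit (condDistrib X Y μ)) (a := ()) hfi
    have h2 : (fun y => ∫ x, f (y, x) ∂(condDistrib X Y μ y)) =ᵐ[μ.map Y] 0 := by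
      refine ae_eq_zero_of_forall_setIntegral_eq_of_sigmaFinite
        (fun s _ _ => hfi2.integrableOn) ?_
      intro s hs _
      have := Measure.setIntegral_compProd (μ := μ.map Y) (κ := condDistrib X Y μ) (f := f) hs MeasurableSet.univ hfi.integrableOn
      simp only [Measure.restrict_univ] at this
      rw [← this, compProd_map_condDistrib hX.aemeasurable,
        setIntegral_map (hs.prod MeasurableSet.univ) hfm.aestronglyMeasurable (hY.prodMk hX).aemeasurable]
      have e : (fun a => (Y a, X a)) ⁻¹' s ×ˢ univ = Y ⁻¹' s := by ext; simp
      rw [e]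
      exact hzero n s hs
    filter_upwards [h1, h2] with y hy1 hy2 hyn
    simp only [hf, indicator_of_mem hyn, one_mul] at hy1 hy2
    have hi : Integrable (fun x => x) (condDistrib X Y μ y) := by
      refine (hy1.add (integrable_const (c * y))).congr (ae_of_all _ fun x => ?_)
      simp
    refine ⟨hi, ?_⟩
    rw [integral_sub hi (integrable_const _)] at hy2
    simp at hy2
    linarith
  filter_upwards [ae_all_iff.2 key] with y hy
  obtain ⟨n, hn⟩ := exists_nat_ge |y|
  exact hy n (abs_le.1 hn)

lemma aux_law {Ω : Type*} [MeasurableSpace Ω] {μ : Measure Ω} [IsProbabilityMeasure μ]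
    (ρ σ₁ σ₂ : ℝ) (hσ₂ : 0 < σ₂) (hρ : |ρ| ≤ 1)
    {G₁ G₂ : Ω → ℝ} (hG₁ : Measurable G₁) (hG₂ : Measurable G₂)
    (hGauss : ∀ t s : ℝ, ∫ ω, Complex.exp (((t * G₁ ω + s * G₂ ω : ℝ) : ℂ) * Complex.I) ∂μ
      = Complex.exp (-(((σ₁ ^ 2 * t ^ 2 + 2 * ρ * σ₁ * σ₂ * t * s + σ₂ ^ 2 * s ^ 2) / 2 : ℝ) : ℂ))) :
    μ.map (fun ω => (G₁ ω - (ρ * σ₁ / σ₂) * G₂ ω, G₂ ω)) =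
      (gaussianReal 0 (σ₁ ^ 2 * (1 - ρ ^ 2)).toNNReal).prod (gaussianReal 0 (σ₂ ^ 2).toNNReal) := by
  have hm : Measurable (fun ω => (G₁ ω - (ρ * σ₁ / σ₂) * G₂ ω, G₂ ω)) := by fun_prop
  have : IsProbabilityMeasure (μ.map (fun ω => (G₁ ω - (ρ * σ₁ / σ₂) * G₂ ω, G₂ ω))) :=
    Measure.isProbabilityMeasure_map hm.aemeasurable
  have h1 : 0 ≤ σ₁ ^ 2 * (1 - ρ ^ 2) := by
    have : ρ ^ 2 ≤ 1 := (sq_le_one_iff_abs_le_one ρ).2 hρ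
    exact mul_nonneg (sq_nonneg _) (by linarith)
  have hdual : ∀ (m : ℝ) (v : NNReal) (L : StrongDual ℝ ℝ),
      charFunDual (gaussianReal m v) L = charFun (gaussianReal m v) (L 1) := by
    intro m v L
    rw [charFunDual_apply, charFun_apply_real]
    congr with x
    have : L x = L 1 * x := by
      have := L.map_smul x 1
      simp at this
      rw [this, mul_comm]
    rw [this]; push_cast; ring_nf
  apply Measure.ext_of_charFunDual
  ext L
  rw [charFunDual_prod, hdual, hdual, charFun_gaussianReal, charFun_gaussianReal, ← Complex.exp_add,
    charFunDual_apply, integral_map hm.aemeasurable (by fun_prop)]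
  set a := L (1, 0) with ha
  set b := L (0, 1) with hb
  have hL : ∀ x y : ℝ, L (x, y) = a * x + b * y := by
    intro x y
    have : ((x, y) : ℝ × ℝ) = x • (1, 0) + y • (0, 1) := by simp
    rw [this, map_add, map_smul, map_smul, smul_eq_mul, smul_eq_mul]; ring
  have hl := hGauss a (b - a * (ρ * σ₁ / σ₂))
  have e : ∀ ω, L (G₁ ω - (ρ * σ₁ / σ₂) * G₂ ω, G₂ ω) =
      a * G₁ ω + (b - a * (ρ * σ₁ / σ₂)) * G₂ ω := by
    intro ω; rw [hL]; ring
  simp only [e]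
  rw [hl]
  congr 1
  simp only [ContinuousLinearMap.comp_apply, ContinuousLinearMap.inl_apply,
    ContinuousLinearMap.inr_apply, ← ha, ← hb]
  rw [Real.coe_toNNReal _ h1, Real.coe_toNNReal _ (sq_nonneg σ₂)]
  simp only [Complex.ofReal_zero, mul_zero, zero_mul, zero_sub]
  norm_cast
  field_simp
  ring

lemma aux_bound (v : NNReal) (hv : v ≠ 0) : ∃ C : NNReal, ∀ s : Set ℝ, gaussianReal 0 v s ≤ C * volume s := by
  refine ⟨Real.toNNReal (√(2 * π * v))⁻¹, fun s => ?_⟩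
  rw [gaussianReal_apply _ hv, ← setLIntegral_const]
  refine lintegral_mono fun x => ?_
  rw [gaussianPDF_def]
  refine ENNReal.ofReal_le_ofReal ?_
  rw [gaussianPDFReal_def]
  refine mul_le_of_le_one_right (by positivity) ?_
  rw [Real.exp_le_one_iff]
  have : 0 ≤ (x-0)^2 / (2 * v) := by positivity
  rw [neg_div]; linarith

lemma aux_int (P : Measure ℝ) [IsProbabilityMeasure P] (v w : NNReal) (hw : w ≠ 0) (n : ℕ) :
    Integrable (fun p : ℝ × ℝ × ℝ => (Icc (-(n:ℝ)) n).indicator (fun _ => (1:ℝ)) (√p.1 * p.2.2) * (√p.1 * p.2.1))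
      (P.prod ((gaussianReal 0 v).prod (gaussianReal 0 w))) := by
  have hi : Measurable ((Icc (-(n:ℝ)) n).indicator (fun _ => (1:ℝ))) :=
    measurable_const.indicator measurableSet_Icc
  obtain ⟨C, hC⟩ := aux_bound w hw
  have hm : Measurable (fun p : ℝ × ℝ × ℝ => (Icc (-(n:ℝ)) n).indicator (fun _ => (1:ℝ)) (√p.1 * p.2.2) * (√p.1 * p.2.1)) := by
    fun_prop
  refine ⟨hm.aestronglyMeasurable, ?_⟩
  rw [hasFiniteIntegral_iff_enorm, lintegral_prod _ (by fun_prop)]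
  have hG : ∫⁻ x, ‖x‖ₑ ∂(gaussianReal 0 v) < ⊤ := by
    have := (memLp_id_gaussianReal (μ := 0) (v := v) 1)
    have := (memLp_one_iff_integrable.1 (by simpa using this)).2
    simpa [hasFiniteIntegral_iff_enorm] using this
  have hb : ∀ a : ℝ, ∫⁻ q, ‖(Icc (-(n:ℝ)) n).indicator (fun _ => (1:ℝ)) (√a * q.2) * (√a * q.1)‖ₑ
      ∂((gaussianReal 0 v).prod (gaussianReal 0 w)) ≤ C * ENNReal.ofReal (2 * n) * ∫⁻ x, ‖x‖ₑ ∂(gaussianReal 0 v) := by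
    intro a
    rw [lintegral_prod _ (by fun_prop), ← lintegral_const_mul _ (by fun_prop)]
    refine lintegral_mono fun x => ?_
    simp only [enorm_mul]
    rw [lintegral_mul_const _ (by fun_prop), ← mul_assoc]
    refine mul_le_mul' ?_ le_rfl
    rcases (Real.sqrt_nonneg a).eq_or_lt' with h0 | h0
    · simp [h0]
    have e : ∀ g : ℝ, ‖(Icc (-(n:ℝ)) n).indicator (fun _ => (1:ℝ)) (√a * g)‖ₑ =
        (Icc (-(n / √a)) (n / √a)).indicator 1 g := by
      intro g
      have : √a * g ∈ Icc (-(n:ℝ)) n ↔ g ∈ Icc (-(n / √a)) (n / √a) := by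
        rw [mem_Icc, mem_Icc, ← neg_div, div_le_iff₀ h0, le_div_iff₀ h0, mul_comm]
      by_cases h : g ∈ Icc (-(n / √a)) (n / √a)
      · rw [indicator_of_mem h, indicator_of_mem (this.2 h)]; simp
      · rw [indicator_of_notMem h, indicator_of_notMem (fun h' => h (this.1 h'))]; simp
    simp only [e]
    rw [lintegral_indicator_one measurableSet_Icc]
    calc _ ≤ C * volume (Icc (-(n / √a)) (n / √a)) * ‖√a‖ₑ := mul_le_mul' (hC _) le_rfl
      _ = C * ENNReal.ofReal (2 * n) := by
        rw [Real.volume_Icc, mul_assoc, Real.enorm_eq_ofReal h0.le, ← ENNReal.ofReal_mul' h0.le]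
        congr 2
        field_simp
        ring
  refine (lintegral_mono hb).trans_lt ?_
  simp only [lintegral_const, measure_univ, mul_one]
  exact ENNReal.mul_lt_top (ENNReal.mul_lt_top ENNReal.coe_lt_top ENNReal.ofReal_lt_top) hG

theorem aux_main_s11
    {Ω : Type*} [MeasurableSpace Ω] {μ : Measure Ω} [IsProbabilityMeasure μ]
    (ρ σ₁ σ₂ : ℝ) 
    (hσ₁ : 0 < σ₁) (hσ₂ : 0 < σ₂) (hρ : |ρ| ≤ 1)
    (A G₁ G₂ : Ω → ℝ) (hA : Measurable A) (hG₁ : Measurable G₁) (hG₂ : Measurable G₂)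
    (hGauss : ∀ t s : ℝ, ∫ ω, Complex.exp (((t * G₁ ω + s * G₂ ω : ℝ) : ℂ) * Complex.I) ∂μ
      = Complex.exp (-(((σ₁ ^ 2 * t ^ 2 + 2 * ρ * σ₁ * σ₂ * t * s + σ₂ ^ 2 * s ^ 2) / 2 : ℝ) : ℂ)))
    (hindep : IndepFun A (fun ω => (G₁ ω, G₂ ω)) μ)
    (X Y : Ω → ℝ) (hX : X = fun ω => Real.sqrt (A ω) * G₁ ω)
    (hY : Y = fun ω => Real.sqrt (A ω) * G₂ ω) :
    ∀ᵐ y ∂(μ.map Y),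
      Integrable (fun x => x) (condDistrib X Y μ y) ∧
      ∫ x, x ∂(condDistrib X Y μ y) = (ρ * σ₁ / σ₂) * y := by
  have hXm : Measurable X := by rw [hX]; fun_prop
  have hYm : Measurable Y := by rw [hY]; fun_prop
  set c := ρ * σ₁ / σ₂ with hc
  have hlaw := aux_law ρ σ₁ σ₂ hσ₂ hρ hG₁ hG₂ hGauss
  rw [← hc] at hlaw
  set v := (σ₁ ^ 2 * (1 - ρ ^ 2)).toNNReal
  set w := (σ₂ ^ 2).toNNReal
  have hw : w ≠ 0 := by
    have : 0 < w := Real.toNNReal_pos.2 (by positivity)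
    exact this.ne'
  have hP : IsProbabilityMeasure (μ.map A) := Measure.isProbabilityMeasure_map hA.aemeasurable
  have hind : IndepFun A (fun ω => (G₁ ω - c * G₂ ω, G₂ ω)) μ :=
    hindep.comp (φ := id) (ψ := fun p : ℝ × ℝ => (p.1 - c * p.2, p.2)) measurable_id (by fun_prop)
  have hT : Measurable (fun ω => (A ω, (G₁ ω - c * G₂ ω, G₂ ω))) := by fun_prop
  have hjoint : μ.map (fun ω => (A ω, (G₁ ω - c * G₂ ω, G₂ ω))) =
      (μ.map A).prod ((gaussianReal 0 v).prod (gaussianReal 0 w)) := by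
    rw [(indepFun_iff_map_prod_eq_prod_map_map hA.aemeasurable (by fun_prop)).1 hind, hlaw]
  have hZ : ∀ ω, X ω - c * Y ω = √(A ω) * (G₁ ω - c * G₂ ω) := by
    intro ω; rw [hX, hY]; ring
  have hYω : ∀ ω, Y ω = √(A ω) * G₂ ω := fun ω => by rw [hY]
  have hi : ∀ n : ℕ, Measurable ((Icc (-(n:ℝ)) n).indicator (fun _ => (1:ℝ))) := fun n =>
    measurable_const.indicator measurableSet_Icc
  refine aux_abstract hXm hYm c ?_ ?_
  · intro n
    have := aux_int (μ.map A) v w hw n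
    rw [← hjoint] at this
    have := this.comp_measurable hT
    refine this.congr (ae_of_all _ fun ω => ?_)
    simp only [Function.comp]
    rw [hZ, hYω]
  · intro n s hs
    rw [← integral_indicator (hYm hs)]
    have his : Measurable (s.indicator (fun _ => (1:ℝ))) := measurable_const.indicator hs
    have hin := hi n
    set h : ℝ × ℝ × ℝ → ℝ := fun p => s.indicator (fun _ => (1:ℝ)) (√p.1 * p.2.2) *
      ((Icc (-(n:ℝ)) n).indicator (fun _ => (1:ℝ)) (√p.1 * p.2.2) * (√p.1 * p.2.1)) with hh
    have hhm : Measurable h := by fun_prop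
    have e : ∀ ω, (Y ⁻¹' s).indicator (fun ω => (Icc (-(n:ℝ)) n).indicator (fun _ => (1:ℝ)) (Y ω) * (X ω - c * Y ω)) ω
        = h (A ω, (G₁ ω - c * G₂ ω, G₂ ω)) := by
      intro ω
      simp only [hh, ← hYω, ← hZ]
      by_cases hm : Y ω ∈ s
      · rw [indicator_of_mem (show ω ∈ Y ⁻¹' s from hm), indicator_of_mem hm, one_mul]
      · rw [indicator_of_notMem (show ω ∉ Y ⁻¹' s from hm), indicator_of_notMem hm, zero_mul]
    simp only [e]
    rw [← integral_map (f := h) hT.aemeasurable hhm.aestronglyMeasurable, hjoint]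
    have hsym : ((μ.map A).prod ((gaussianReal 0 v).prod (gaussianReal 0 w))).map
        (Prod.map id (Prod.map (fun x => -x) id)) =
        (μ.map A).prod ((gaussianReal 0 v).prod (gaussianReal 0 w)) := by
      rw [← Measure.map_prod_map _ _ measurable_id (by fun_prop),
        ← Measure.map_prod_map _ _ (by fun_prop) measurable_id, gaussianReal_map_neg]
      simp
    have hs2 : ∫ p, h p ∂((μ.map A).prod ((gaussianReal 0 v).prod (gaussianReal 0 w))) =
        -∫ p, h p ∂((μ.map A).prod ((gaussianReal 0 v).prod (gaussianReal 0 w))) := by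
      conv_lhs => rw [← hsym]
      rw [integral_map (by fun_prop) hhm.aestronglyMeasurable, ← integral_neg]
      congr with p
      simp [hh]
    linarith

/-- Linearity of the conditional mean in the sub-Gaussian SαS model `X = √A·G₁`,
`Y = √A·G₂`: for almost every `y`, the conditional mean of `X` given `Y = y` exists
and equals `(ρσ₁/σ₂)·y`. -/
theorem subGaussian_condMean_linear
    {Ω : Type*} [MeasurableSpace Ω] {μ : Measure Ω} [IsProbabilityMeasure μ]
    (α ρ σ₁ σ₂ : ℝ) (hα : α ∈ Set.Ioo (0 : ℝ) 2)
    (hσ₁ : 0 < σ₁) (hσ₂ : 0 < σ₂) (hρ : |ρ| ≤ 1)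
    (A G₁ G₂ : Ω → ℝ) (hA : Measurable A) (hG₁ : Measurable G₁) (hG₂ : Measurable G₂)
    (hApos : ∀ ω, 0 ≤ A ω)
    (hLaplace : ∀ u : ℝ, 0 ≤ u → ∫ ω, Real.exp (-u * A ω) ∂μ
      = Real.exp (-(Real.cos (π * α / 4) ^ (2 / α) * u) ^ (α / 2)))
    (hGauss : ∀ t s : ℝ, ∫ ω, Complex.exp (((t * G₁ ω + s * G₂ ω : ℝ) : ℂ) * Complex.I) ∂μ
      = Complex.exp (-(((σ₁ ^ 2 * t ^ 2 + 2 * ρ * σ₁ * σ₂ * t * s + σ₂ ^ 2 * s ^ 2) / 2 : ℝ) : ℂ)))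
    (hindep : IndepFun A (fun ω => (G₁ ω, G₂ ω)) μ)
    (X Y : Ω → ℝ) (hX : X = fun ω => Real.sqrt (A ω) * G₁ ω)
    (hY : Y = fun ω => Real.sqrt (A ω) * G₂ ω) :
    ∀ᵐ y ∂(μ.map Y),
      Integrable (fun x => x) (condDistrib X Y μ y) ∧
      ∫ x, x ∂(condDistrib X Y μ y) = (ρ * σ₁ / σ₂) * y := by
  exact aux_main_s11 ρ σ₁ σ₂ hσ₁ hσ₂ hρ A G₁ G₂ hA hG₁ hG₂ hGauss hindep X Y hX hY
end
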